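/- Let μ be a non-negative Poisson measure on ℝ^d, let E = ∪_n B(x_n, R_n) be a union of balls with R_n → ∞, and assume that for all distinct λ, λ' ∈ E ∩ supp μ one has μ({λ}) ≥ c > 0 and |λ−λ'| ≥ β > 0, and that |μ̂|(B(0,r)) = O(r^d) as r → ∞. Then there exist N ∈ ℕ, points λ_1,…,λ_N ∈ supp μ, and nondegenerate (invertible) linear operators T_1,…,T_N on ℝ^d such that supp μ = ∪_{j=1}^N (T_j ℤ^d + λ_j) and μ = Σ_{j=1}^N Σ_{λ ∈ T_j ℤ^d + λ_j} Q_j(λ) δ_λ, where each Q_j is a Dirichlet series Q_j(x) = Σ_{ω ∈ Ω_j} q_ω^{(j)} e^{2πi x·ω} with q_ω^{(j)} ∈ ℂ, Σ_{ω ∈ Ω_j} |q_ω^{(j)}| < ∞, and Ω_j a bounded subset of ℝ^d. -/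

import Mathlib

open MeasureTheory Metric Filter Topology Complex SchwartzMap Bornology
open scoped RealInnerProductSpace ENNReal

noncomputable section

/-- A continuous function `g` is *Bohr almost periodic* if for every `ε > 0` its set of
`ε`-almost periods is relatively dense. -/
def IsBohrAP {V : Type*} [SeminormedAddCommGroup V] (g : V → ℂ) : Prop :=
  Continuous g ∧ ∀ ε : ℝ, 0 < ε → ∃ L : ℝ, 0 < L ∧ ∀ x : V, ∃ τ : V,
    dist τ x < L ∧ ∀ y : V, ‖g (y + τ) - g y‖ < ε

/-- A pure point complex measure on `V`, described by its (countably supported) mass function. -/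
structure PPM (V : Type*) where
  mass : V → ℂ
  countable : (Function.support mass).Countable

namespace PPM

variable {V : Type*}

/-- The total variation of a pure point measure, evaluated on a set. -/
def var (μ : PPM V) (A : Set V) : ℝ≥0∞ := ∑' x : A, (‖μ.mass x‖₊ : ℝ≥0∞)

/-- Pairing of a pure point measure with a test function: `∫ φ dμ = Σ_x μ{x}·φ(x)`. -/
def pair (μ : PPM V) (φ : V → ℂ) : ℂ := ∑' x, μ.mass x * φ x

/-- Convolution `(μ ⋆ ψ)(t) = ∫ ψ(t - x) dμ(x)`. -/
def conv [SubtractionMonoid V] (μ : PPM V) (ψ : V → ℂ) (t : V) : ℂ :=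
  ∑' x, μ.mass x * ψ (t - x)

/-- A pure point measure is non-negative if each mass is a non-negative real number. -/
def Nonneg (μ : PPM V) : Prop := ∀ x, μ.mass x = (‖μ.mass x‖ : ℂ)

end PPM

/-- Euclidean space `ℝ^d`. -/
abbrev Ed (d : ℕ) := EuclideanSpace ℝ (Fin d)

variable {d : ℕ}

/-- Local finiteness: the total variation of every ball is finite. -/
def PPM.locFinite (μ : PPM (Ed d)) : Prop := ∀ r : ℝ, μ.var (ball 0 r) < ⊤

/-- The measure is a temperate distribution: it pairs (absolutely) with every Schwartz
function. -/
def PPM.temperate (μ : PPM (Ed d)) : Prop :=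
  ∀ φ : SchwartzMap (Ed d) ℂ, Summable fun x => μ.mass x * φ x

/-- `ν` is the distributional Fourier transform of `μ`: `μ(φ̂) = ν(φ)` on test functions. -/
def IsFT (μ ν : PPM (Ed d)) : Prop :=
  ∀ φ : SchwartzMap (Ed d) ℂ, HasCompactSupport φ →
    μ.pair ⇑(FourierTransform.fourierCLE ℂ (SchwartzMap (Ed d) ℂ) φ) = ν.pair ⇑φ

/-- A Poisson measure: a pure point measure which is a temperate distribution and whose
distributional Fourier transform is a pure point measure. -/
def IsPoisson (μ : PPM (Ed d)) : Prop :=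
  μ.locFinite ∧ μ.temperate ∧ ∃ ν : PPM (Ed d), ν.locFinite ∧ IsFT μ ν


/-- The shifted lattice `T ℤ^d + l`, where `T` is an invertible linear operator on `ℝ^d`. -/
def latt {d : ℕ} (T : Ed d ≃ₗ[ℝ] Ed d) (l : Ed d) : Set (Ed d) :=
  {x : Ed d | ∃ m : Fin d → ℤ, x = T ((WithLp.equiv 2 (Fin d → ℝ)).symm fun i => (m i : ℝ)) + l}

/-- The value at `x` of the Dirichlet series `Σ_ω q_ω e^{2πi x·ω}`. -/
def dser {d : ℕ} (q : ℕ → ℂ) (ω : ℕ → Ed d) (x : Ed d) : ℂ :=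
  ∑' i : ℕ, q i * Complex.exp (((2 * Real.pi * ⟪x, ω i⟫ : ℝ) : ℂ) * Complex.I)

/-!
Positivity turns the growth of `μ̂` into `μ(B(0, r)) = O(r ^ d)`, and testing `μ` against bumps
of shrinking radius writes its masses as pointwise limits of character sums over the atoms of
`μ̂` whose coefficients are bounded in `ℓ¹`. By the GNS construction for a limit of the
corresponding functionals, the mass function is a matrix coefficient `⟪w, U x v⟫` of a unitary
representation `U` of the discrete group `ℝ ^ d`.

A bounded sequence of characters accumulates, so there are vectors `τ k`, differences of terms
of a prescribed sequence, along which all countably many characters occurring in `μ̂` tend to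
`1`. The translates of `μ` by `τ k` then converge vaguely to `μ`; choosing `τ` such that every
ball is moved into `E` extends the lower bound on the masses and the separation to the whole
support.

Now let `h` be a weak limit of the operators `U (γ k)` with `γ k - τ k → 0`. Because the masses
are bounded below, `h⋆ h` acts on `v` as a projection, and `⟪w, U x (h⋆ h) v⟫` is the mass
function restricted to the points which return to the support along `γ`. Hence `U (γ k)`
converges in norm on `h⋆ h v`, so that eventually the differences of the `γ k` are periods of
this return set. If `τ k` escapes to infinity in every direction, the periods span `ℝ ^ d`, and
each return set is a finite union of lattice translates. Distinct return sets are disjoint and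
give orthogonal vectors `h⋆ h v` of norm bounded below, so by Bessel's inequality there are only
finitely many.

Finally, testing `μ` against a bump supported in a ball whose radius is the separation shows
that on its support the mass function is an absolutely convergent character sum. On a translate
of a lattice the frequencies matter only modulo the dual lattice, so they can be taken in a
bounded set.
-/

section WeakLimits

open scoped InnerProductSpace

variable {ι : Type*} (u : Ultrafilter ι)

lemma exists_tendsto_of_norm_le {E : Type*} [NormedAddCommGroup E] [ProperSpace E]
    {f : ι → E} {C : ℝ} (hf : ∀ i, ‖f i‖ ≤ C) : ∃ z, ‖z‖ ≤ C ∧ Tendsto f u (𝓝 z) := by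
  have hmem : (u.map f : Filter E) ≤ 𝓟 (closedBall 0 C) :=
    le_principal_iff.2 (mem_map.2 (Eventually.of_forall fun i => mem_closedBall_zero_iff.2 (hf i)))
  obtain ⟨z, hz, hlim⟩ := (isCompact_closedBall (0 : E) C).ultrafilter_le_nhds (u.map f) hmem
  exact ⟨z, mem_closedBall_zero_iff.1 hz, hlim⟩

variable {H : Type*} [NormedAddCommGroup H] [InnerProductSpace ℂ H] [CompleteSpace H]

lemma exists_weakLimit {W : ι → H →L[ℂ] H} (hW : ∀ i, ‖W i‖ ≤ 1) :
    ∃ h : H →L[ℂ] H, ∀ a b, Tendsto (fun i => ⟪a, W i b⟫_ℂ) u (𝓝 ⟪a, h b⟫_ℂ) := by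
  have hbound (b a : H) (i : ι) : ‖⟪W i b, a⟫_ℂ‖ ≤ 1 * ‖b‖ * ‖a‖ :=
    (norm_inner_le_norm _ _).trans (by gcongr; exact (W i).le_of_opNorm_le (hW i) b)
  choose L hLnorm hL using fun b a => exists_tendsto_of_norm_le u (hbound b a)
  have hunique {b a : H} {z : ℂ} (hz : Tendsto (fun i => ⟪W i b, a⟫_ℂ) u (𝓝 z)) : L b a = z :=
    tendsto_nhds_unique (hL b a) hz
  let B : H →L⋆[ℂ] H →L[ℂ] ℂ := LinearMap.mkContinuous₂
    (LinearMap.mk₂'ₛₗ (starRingEnd ℂ) (RingHom.id ℂ) L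
      (fun b b' a => hunique (by simpa only [map_add, inner_add_left] using (hL b a).add (hL b' a)))
      (fun r b a => hunique (by
        simpa only [map_smul, inner_smul_left, smul_eq_mul] using (hL b a).const_mul _))
      (fun b a a' => hunique (by simpa only [inner_add_right] using (hL b a).add (hL b a')))
      (fun r b a => hunique (by
        simpa only [inner_smul_right, smul_eq_mul, RingHom.id_apply] using (hL b a).const_mul r)))
    1 hLnorm
  refine ⟨InnerProductSpace.continuousLinearMapOfBilin B, fun a b => ?_⟩
  have hconj := (Complex.continuous_conj.tendsto _).comp (hL b a)
  have hB : ⟪InnerProductSpace.continuousLinearMapOfBilin B b, a⟫_ℂ = L b a :=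
    InnerProductSpace.continuousLinearMapOfBilin_apply B b a
  rw [← hB] at hconj
  simpa only [Function.comp_def, inner_conj_symm] using hconj

end WeakLimits

section SelfAdjoint

open scoped InnerProductSpace

variable {H : Type*} [NormedAddCommGroup H] [InnerProductSpace ℂ H] [CompleteSpace H]

lemma inner_apply_eq_zero_of_forall_pow {T : H →L[ℂ] H} (hT : IsSelfAdjoint T) {w y : H}
    (hw : ∀ n, ⟪w, (T ^ (n + 2)) y⟫_ℂ = 0) : ⟪w, T y⟫_ℂ = 0 := by
  let K : Submodule ℂ H :=
    (Submodule.span ℂ (Set.range fun n => (T ^ (n + 2)) y)).topologicalClosure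
  have hpow (n : ℕ) : (T ^ (n + 2)) y ∈ K :=
    Submodule.le_topologicalClosure _ (Submodule.subset_span (Set.mem_range_self n))
  have hK : K.IsOrtho (ℂ ∙ w) :=
    Submodule.topologicalClosure_minimal _
      (Submodule.span_le.2 (Set.range_subset_iff.2 fun n =>
        Submodule.mem_orthogonal_singleton_iff_inner_right.2 (hw n)))
      (Submodule.isClosed_orthogonal _)
  have hTK : K ≤ K.comap (T : H →ₗ[ℂ] H) :=
    Submodule.topologicalClosure_minimal _
      (Submodule.span_le.2 (Set.range_subset_iff.2 fun n => by
        have hsucc := hpow (n + 1)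
        rwa [add_right_comm, pow_succ'] at hsucc))
      ((Submodule.isClosed_topologicalClosure _).preimage T.continuous)
  -- The component `z` of `T y` orthogonal to `K` has `T z, T ^ 2 z ∈ K`, so that
  -- `‖T z‖ ^ 2 = ⟪z, T ^ 2 z⟫ = 0`; then `z` is orthogonal to the range of `T` as well as to `K`.
  have : K.HasOrthogonalProjection := Submodule.HasOrthogonalProjection.ofCompleteSpace K
  obtain ⟨k, hk, z, hz, hyz⟩ := K.exists_add_mem_mem_orthogonal (T y)
  have hTz : T z ∈ K := by
    rw [eq_sub_of_add_eq' hyz.symm, map_sub]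
    exact K.sub_mem (hpow 0) (hTK hk)
  have hsymm (a b : H) : ⟪T a, b⟫_ℂ = ⟪a, T b⟫_ℂ := hT.isSymmetric a b
  have hTz0 : T z = 0 := by
    rw [← inner_self_eq_zero (𝕜 := ℂ), hsymm]
    exact Submodule.inner_left_of_mem_orthogonal (show T (T z) ∈ K from hTK hTz) hz
  have hz0 : z = 0 := by
    rw [← inner_self_eq_zero (𝕜 := ℂ)]
    nth_rw 2 [eq_sub_of_add_eq' hyz.symm]
    rw [inner_sub_right, ← hsymm, hTz0, inner_zero_left,
      Submodule.inner_left_of_mem_orthogonal hk hz, sub_zero]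
  rw [hyz, hz0, add_zero]
  exact hK.symm.inner_eq (Submodule.mem_span_singleton_self w) hk

end SelfAdjoint

section Representation

open scoped InnerProductSpace

variable {V : Type*} [AddCommGroup V] {H : Type*} [NormedAddCommGroup H] [InnerProductSpace ℂ H]
  [CompleteSpace H] (U : AddChar V (unitary (H →L[ℂ] H)))

/-- The bicommutant of a unitary representation `U`; as the acting group is abelian, it is a
commutative algebra. -/
def bicommutant : StarSubalgebra ℂ (H →L[ℂ] H) :=
  StarSubalgebra.centralizer ℂ
    (StarSubalgebra.centralizer ℂ (Set.range fun x => (U x : H →L[ℂ] H)) : Set (H →L[ℂ] H))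

/-- The function `x ↦ ⟪w, Z (U x v)⟫` attached to an operator `Z`. For `Z = 1` this is the usual
matrix coefficient of the representation `U`. -/
def matrixCoeff (v w : H) (Z : H →L[ℂ] H) (x : V) : ℂ := ⟪w, Z ((U x : H →L[ℂ] H) v)⟫_ℂ

/-- `h` is the limit of the operators `U (γ i)` along `u` in the weak operator topology. -/
def IsWeakLimit {ι : Type*} (u : Ultrafilter ι) (γ : ι → V) (h : H →L[ℂ] H) : Prop :=
  ∀ a b, Tendsto (fun i => ⟪a, (U (γ i) : H →L[ℂ] H) b⟫_ℂ) u (𝓝 ⟪a, h b⟫_ℂ)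

variable {U}

lemma star_unitaryRep (x : V) : star (U x : H →L[ℂ] H) = U (-x) := by
  have hinv : U (-x) = (U x)⁻¹ :=
    eq_inv_of_mul_eq_one_left
      (by rw [← AddChar.map_add_eq_mul, neg_add_cancel, AddChar.map_zero_eq_one])
  rw [hinv, ← Unitary.coe_star, Unitary.star_eq_inv]

lemma inner_unitaryRep_left (x : V) (a b : H) :
    ⟪(U x : H →L[ℂ] H) a, b⟫_ℂ = ⟪a, (U (-x) : H →L[ℂ] H) b⟫_ℂ := by
  rw [← star_unitaryRep, ContinuousLinearMap.star_eq_adjoint,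
    ContinuousLinearMap.adjoint_inner_right]

lemma mem_bicommutant_of_forall_commute {h : H →L[ℂ] H}
    (hh : ∀ Z : H →L[ℂ] H, (∀ x, Commute (U x : H →L[ℂ] H) Z) → Commute Z h) :
    h ∈ bicommutant U := by
  refine (StarSubalgebra.mem_centralizer_iff ℂ).2 fun Z hZ =>
    ⟨hh Z fun x => ?_, hh (star Z) fun x => ?_⟩
  · exact (StarSubalgebra.mem_centralizer_iff ℂ |>.1 hZ _ ⟨x, rfl⟩).1
  · exact (StarSubalgebra.mem_centralizer_iff ℂ |>.1 (star_mem hZ) _ ⟨x, rfl⟩).1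

lemma commute_of_mem_bicommutant {h Z : H →L[ℂ] H} (hh : h ∈ bicommutant U)
    (hZ : ∀ x, Commute (U x : H →L[ℂ] H) Z) : Commute Z h := by
  refine (StarSubalgebra.mem_centralizer_iff ℂ |>.1 hh Z ?_).1
  rw [SetLike.mem_coe, StarSubalgebra.mem_centralizer_iff]
  rintro _ ⟨x, rfl⟩
  refine ⟨hZ x, ?_⟩
  rw [star_unitaryRep]
  exact hZ (-x)

lemma commute_unitaryRep_of_mem_bicommutant {Z : H →L[ℂ] H} (hZ : Z ∈ bicommutant U) (x : V) :
    Commute (U x : H →L[ℂ] H) Z := by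
  refine commute_of_mem_bicommutant hZ fun y => ?_
  simp only [Commute, SemiconjBy, ← Submonoid.coe_mul, ← AddChar.map_add_eq_mul, add_comm]

lemma commute_of_mem_bicommutant_of_mem_bicommutant {Y Z : H →L[ℂ] H} (hY : Y ∈ bicommutant U)
    (hZ : Z ∈ bicommutant U) : Commute Y Z :=
  commute_of_mem_bicommutant hZ (commute_unitaryRep_of_mem_bicommutant hY)

namespace IsWeakLimit

variable {ι : Type*} {u : Ultrafilter ι} {γ : ι → V} {h : H →L[ℂ] H}

lemma exists_isWeakLimit (U : AddChar V (unitary (H →L[ℂ] H))) (u : Ultrafilter ι) (γ : ι → V) :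
    ∃ h, IsWeakLimit U u γ h :=
  exists_weakLimit u fun i => ContinuousLinearMap.opNorm_le_bound _ zero_le_one fun a => by
    rw [Unitary.norm_map, one_mul]

lemma mem_bicommutant (hh : IsWeakLimit U u γ h) : h ∈ bicommutant U := by
  refine mem_bicommutant_of_forall_commute fun Z hZ => ?_
  refine ContinuousLinearMap.ext fun b => ext_inner_left ℂ fun a => ?_
  rw [mul_apply_eq_comp, mul_apply_eq_comp, ← ContinuousLinearMap.adjoint_inner_left]
  refine tendsto_nhds_unique (hh _ b) ((hh a (Z b)).congr fun i => ?_)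
  rw [ContinuousLinearMap.adjoint_inner_left, ← mul_apply_eq_comp, ← mul_apply_eq_comp,
    (hZ (γ i)).eq]

protected lemma star (hh : IsWeakLimit U u γ h) : IsWeakLimit U u (-γ) (star h) := fun a b => by
  have hconj := (Complex.continuous_conj.tendsto _).comp (hh b a)
  simp only [Function.comp_def, inner_conj_symm, inner_unitaryRep_left] at hconj
  rwa [ContinuousLinearMap.star_eq_adjoint, ContinuousLinearMap.adjoint_inner_right]

end IsWeakLimit

section MatrixCoeff

variable {v w : H} {Z : H →L[ℂ] H}

lemma matrixCoeff_eq_inner (hZ : Z ∈ bicommutant U) (x : V) :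
    matrixCoeff U v w Z x = ⟪(U (-x) : H →L[ℂ] H) w, Z v⟫_ℂ := by
  rw [inner_unitaryRep_left, neg_neg, matrixCoeff, ← mul_apply_eq_comp, ← mul_apply_eq_comp,
    (commute_unitaryRep_of_mem_bicommutant hZ x).eq]

lemma norm_matrixCoeff_le (hZ : Z ∈ bicommutant U) (x : V) :
    ‖matrixCoeff U v w Z x‖ ≤ ‖w‖ * ‖Z v‖ := by
  rw [matrixCoeff_eq_inner hZ, ← Unitary.norm_map (U (-x)) w]
  exact norm_inner_le_norm _ _

lemma IsWeakLimit.tendsto_matrixCoeff {ι : Type*} {u : Ultrafilter ι} {γ : ι → V}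
    {h : H →L[ℂ] H} (hh : IsWeakLimit U u γ h) (hZ : Z ∈ bicommutant U) (x : V) :
    Tendsto (fun i => matrixCoeff U v w Z (x + γ i)) u (𝓝 (matrixCoeff U v w (h * Z) x)) := by
  refine (hh w (Z ((U x : H →L[ℂ] H) v))).congr fun i => ?_
  rw [matrixCoeff, add_comm, AddChar.map_add_eq_mul, Submonoid.coe_mul, ← mul_apply_eq_comp,
    ← mul_apply_eq_comp, ← mul_apply_eq_comp, ← mul_assoc,
    (commute_unitaryRep_of_mem_bicommutant hZ (γ i)).eq, mul_assoc]

end MatrixCoeff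

end Representation

section CyclicVector

open scoped InnerProductSpace

variable {V : Type*} [AddCommGroup V] {H : Type*} [NormedAddCommGroup H] [InnerProductSpace ℂ H]
  [CompleteSpace H] (U : AddChar V (unitary (H →L[ℂ] H)))

/-- The cyclic subspace generated by `w`: the smallest closed invariant subspace containing it. -/
def cyclicSubspace (w : H) : Submodule ℂ H :=
  (Submodule.span ℂ (Set.range fun x => (U x : H →L[ℂ] H) w)).topologicalClosure

variable {U} {v w : H}

lemma unitaryRep_apply_mem_cyclicSubspace (x : V) : (U x : H →L[ℂ] H) w ∈ cyclicSubspace U w :=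
  Submodule.le_topologicalClosure _ (Submodule.subset_span (Set.mem_range_self x))

lemma mem_orthogonal_cyclicSubspace_iff {z : H} :
    z ∈ (cyclicSubspace U w)ᗮ ↔ ∀ x, ⟪(U x : H →L[ℂ] H) w, z⟫_ℂ = 0 := by
  rw [cyclicSubspace, Submodule.orthogonal_closure]
  refine ⟨fun hz x => Submodule.inner_right_of_mem_orthogonal
    (Submodule.subset_span (Set.mem_range_self x)) hz, fun hz => ?_⟩
  have hle : Submodule.span ℂ (Set.range fun x => (U x : H →L[ℂ] H) w) ≤ (ℂ ∙ z)ᗮ :=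
    Submodule.span_le.2 (Set.range_subset_iff.2 fun x =>
      Submodule.mem_orthogonal_singleton_iff_inner_left.2 (hz x))
  exact fun y hy => Submodule.mem_orthogonal_singleton_iff_inner_left.1 (hle hy)

instance : (cyclicSubspace U w).HasOrthogonalProjection :=
  have : CompleteSpace (cyclicSubspace U w) :=
    (Submodule.isClosed_topologicalClosure _).completeSpace_coe
  inferInstance

lemma commute_starProjection_cyclicSubspace (x : V) :
    Commute (U x : H →L[ℂ] H) (cyclicSubspace U w).starProjection := by
  refine ((ContinuousLinearMap.IsIdempotentElem.commute_iff
    (cyclicSubspace U w).isIdempotentElem_starProjection).2 ⟨?_, ?_⟩).symm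
  · rw [Submodule.range_starProjection, Module.End.mem_invtSubmodule]
    refine Submodule.topologicalClosure_minimal _
      (Submodule.span_le.2 (Set.range_subset_iff.2 fun y => ?_))
      ((Submodule.isClosed_topologicalClosure _).preimage (U x : H →L[ℂ] H).continuous)
    have hmem := unitaryRep_apply_mem_cyclicSubspace (U := U) (w := w) (x + y)
    rwa [AddChar.map_add_eq_mul, Submonoid.coe_mul, mul_apply_eq_comp] at hmem
  · rw [Submodule.ker_starProjection, Module.End.mem_invtSubmodule]
    intro z hz
    refine mem_orthogonal_cyclicSubspace_iff.2 fun y => ?_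
    rw [ContinuousLinearMap.coe_coe, ← neg_neg x, ← inner_unitaryRep_left, ← mul_apply_eq_comp,
      ← Submonoid.coe_mul, ← AddChar.map_add_eq_mul]
    exact mem_orthogonal_cyclicSubspace_iff.1 hz _

lemma apply_mem_cyclicSubspace {Z : H →L[ℂ] H} (hZ : Z ∈ bicommutant U)
    (hv : v ∈ cyclicSubspace U w) : Z v ∈ cyclicSubspace U w := by
  have hcomm := commute_of_mem_bicommutant hZ (commute_starProjection_cyclicSubspace (w := w))
  rw [← Submodule.starProjection_eq_self_iff, ← mul_apply_eq_comp, hcomm.eq, mul_apply_eq_comp,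
    Submodule.starProjection_eq_self_iff.2 hv]

lemma apply_eq_zero_of_matrixCoeff_eq_zero (hv : v ∈ cyclicSubspace U w) {Z : H →L[ℂ] H}
    (hZ : Z ∈ bicommutant U) (h : ∀ x, matrixCoeff U v w Z x = 0) : Z v = 0 := by
  have horth : Z v ∈ (cyclicSubspace U w)ᗮ := mem_orthogonal_cyclicSubspace_iff.2 fun x => by
    rw [← h (-x), matrixCoeff_eq_inner hZ, neg_neg]
  exact inner_self_eq_zero.1
    (Submodule.inner_right_of_mem_orthogonal (𝕜 := ℂ) (apply_mem_cyclicSubspace hZ hv) horth)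

lemma apply_eq_apply_of_matrixCoeff_eq (hv : v ∈ cyclicSubspace U w) {Y Z : H →L[ℂ] H}
    (hY : Y ∈ bicommutant U) (hZ : Z ∈ bicommutant U)
    (h : ∀ x, matrixCoeff U v w Y x = matrixCoeff U v w Z x) : Y v = Z v := by
  rw [← sub_eq_zero, ← sub_apply]
  refine apply_eq_zero_of_matrixCoeff_eq_zero hv (sub_mem hY hZ) fun x => ?_
  rw [matrixCoeff, sub_apply, inner_sub_right]
  exact sub_eq_zero.2 (h x)

lemma exists_mem_cyclicSubspace_matrixCoeff_one (U : AddChar V (unitary (H →L[ℂ] H))) (v w : H) :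
    ∃ v' ∈ cyclicSubspace U w, matrixCoeff U v' w 1 = matrixCoeff U v w 1 := by
  refine ⟨(cyclicSubspace U w).starProjection v, Submodule.starProjection_apply_mem _ _, ?_⟩
  funext x
  have horth := mem_orthogonal_cyclicSubspace_iff.1
    ((cyclicSubspace U w).sub_starProjection_mem_orthogonal v) (-x)
  rw [inner_sub_right, sub_eq_zero] at horth
  rw [matrixCoeff_eq_inner (one_mem _), matrixCoeff_eq_inner (one_mem _)]
  exact horth.symm

end CyclicVector

section ReturnSet

variable {V : Type*} [AddCommGroup V] {ι : Type*} (u : Ultrafilter ι) (γ : ι → V)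

/-- The points whose translates by `γ i` lie in `S` for `u`-almost every `i`. -/
def returnSet (S : Set V) : Set V := {x | ∀ᶠ i in u, x + γ i ∈ S}

/-- `γ` is a *return sequence* of `m` along `u` if the translates of `m` by `γ i` converge to `m` at
every point where they do not eventually vanish. -/
def IsReturnSeq (m : V → ℂ) : Prop :=
  ∀ x, (∀ᶠ i in u, m (x + γ i) ≠ 0) → Tendsto (fun i => m (x + γ i)) u (𝓝 (m x))

variable {u γ}

lemma returnSet_mono : Monotone (returnSet u γ) := fun _ _ hST _ hx => hx.mono fun _ hi => hST hi

variable {m : V → ℂ} {S : Set V}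

lemma IsReturnSeq.returnSet_subset_support (hγ : IsReturnSeq u γ m) {c : ℝ} (hc : 0 < c)
    (hgap : ∀ x, m x ≠ 0 → c ≤ ‖m x‖) (hS : S ⊆ Function.support m) :
    returnSet u γ S ⊆ Function.support m := by
  intro x hx
  have hne : ∀ᶠ i in u, m (x + γ i) ≠ 0 := hx.mono fun i hi => hS hi
  have hle : c ≤ ‖m x‖ := ge_of_tendsto (hγ x hne).norm (hne.mono fun i hi => hgap _ hi)
  exact norm_pos_iff.1 (hc.trans_le hle)

lemma IsReturnSeq.tendsto_indicator (hγ : IsReturnSeq u γ m) (hS : S ⊆ Function.support m) (x : V) :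
    Tendsto (fun i => S.indicator m (x + γ i)) u (𝓝 ((returnSet u γ S).indicator m x)) := by
  by_cases hx : x ∈ returnSet u γ S
  · rw [Set.indicator_of_mem hx]
    exact (hγ x (hx.mono fun i hi => hS hi)).congr'
      (hx.mono fun i hi => (Set.indicator_of_mem hi m).symm)
  · rw [Set.indicator_of_notMem hx]
    exact tendsto_const_nhds.congr'
      ((Ultrafilter.eventually_not.2 hx).mono fun i hi => (Set.indicator_of_notMem hi m).symm)

end ReturnSet

section ReturnProjection

open scoped InnerProductSpace

variable {V : Type*} [AddCommGroup V] {H : Type*} [NormedAddCommGroup H] [InnerProductSpace ℂ H]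
  [CompleteSpace H] {U : AddChar V (unitary (H →L[ℂ] H))} {v w : H} {m : V → ℂ}
  {ι : Type*} {u : Ultrafilter ι} {γ : ι → V} {h Z : H →L[ℂ] H} {S : Set V}

lemma IsWeakLimit.matrixCoeff_mul_eq_indicator (hh : IsWeakLimit U u γ h)
    (hZ : Z ∈ bicommutant U) (hγ : IsReturnSeq u γ m) (hS : S ⊆ Function.support m)
    (hZS : matrixCoeff U v w Z = S.indicator m) :
    matrixCoeff U v w (h * Z) = (returnSet u γ S).indicator m := by
  funext x
  refine tendsto_nhds_unique (hh.tendsto_matrixCoeff hZ x) ?_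
  simpa only [hZS] using hγ.tendsto_indicator hS x

lemma inner_apply_apply_eq (h : H →L[ℂ] H) (a b : H) : ⟪h a, h b⟫_ℂ = ⟪a, (star h * h) b⟫_ℂ := by
  rw [mul_apply_eq_comp, ContinuousLinearMap.star_eq_adjoint,
    ContinuousLinearMap.adjoint_inner_right]

/-- The data of a coefficient `m x = ⟪w, U x v⟫` with values bounded away from `0` on its support,
of a sequence `γ` returning to this support in both directions, and of the weak limit `h` of the
operators `U (γ i)`. -/
structure ReturnLimit (U : AddChar V (unitary (H →L[ℂ] H))) (v w : H) (m : V → ℂ)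
    (u : Ultrafilter ι) (γ : ι → V) (h : H →L[ℂ] H) : Prop where
  mem_cyclicSubspace : v ∈ cyclicSubspace U w
  matrixCoeff_one : matrixCoeff U v w 1 = m
  gap : ∃ c > 0, ∀ x, m x ≠ 0 → c ≤ ‖m x‖
  isReturnSeq : IsReturnSeq u γ m
  isReturnSeq_neg : IsReturnSeq u (-γ) m
  isWeakLimit : IsWeakLimit U u γ h

namespace ReturnLimit

variable (hR : ReturnLimit U v w m u γ h)
include hR

lemma mem_bicommutant : star h * h ∈ bicommutant U :=
  mul_mem (star_mem hR.isWeakLimit.mem_bicommutant) hR.isWeakLimit.mem_bicommutant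

lemma returnSet_subset (hS : S ⊆ Function.support m) : returnSet u γ S ⊆ Function.support m :=
  let ⟨_, hc, hgap⟩ := hR.gap
  hR.isReturnSeq.returnSet_subset_support hc hgap hS

lemma returnSet_neg_subset (hS : S ⊆ Function.support m) :
    returnSet u (-γ) S ⊆ Function.support m :=
  let ⟨_, hc, hgap⟩ := hR.gap
  hR.isReturnSeq_neg.returnSet_subset_support hc hgap hS

lemma matrixCoeff_mul (hZ : Z ∈ bicommutant U) (hS : S ⊆ Function.support m)
    (hZS : matrixCoeff U v w Z = S.indicator m) :
    matrixCoeff U v w (star h * h * Z) = (returnSet u (-γ) (returnSet u γ S)).indicator m := by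
  rw [mul_assoc]
  exact hR.isWeakLimit.star.matrixCoeff_mul_eq_indicator
    (mul_mem hR.isWeakLimit.mem_bicommutant hZ) hR.isReturnSeq_neg (hR.returnSet_subset hS)
    (hR.isWeakLimit.matrixCoeff_mul_eq_indicator hZ hR.isReturnSeq hS hZS)

lemma matrixCoeff_one_eq_indicator :
    matrixCoeff U v w 1 = (Function.support m).indicator m := by
  rw [hR.matrixCoeff_one, Set.indicator_support]

lemma antitone_iterate :
    Antitone fun n => (returnSet u (-γ) ∘ returnSet u γ)^[n] (Function.support m) :=
  (returnSet_mono.comp returnSet_mono).antitone_iterate_of_map_le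
    (hR.returnSet_neg_subset (hR.returnSet_subset subset_rfl))

lemma matrixCoeff_pow (n : ℕ) : matrixCoeff U v w ((star h * h) ^ n) =
    ((returnSet u (-γ) ∘ returnSet u γ)^[n] (Function.support m)).indicator m := by
  induction n with
  | zero => rw [pow_zero, Function.iterate_zero, id_eq, hR.matrixCoeff_one_eq_indicator]
  | succ n ih =>
    rw [pow_succ', Function.iterate_succ_apply']
    exact hR.matrixCoeff_mul (pow_mem hR.mem_bicommutant n) (hR.antitone_iterate n.zero_le) ih

/-- The sets attached to the powers of `T = h⋆ h` decrease. A point leaving them between the first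
and the second step would contradict `inner_apply_eq_zero_of_forall_pow`. -/
lemma apply_sq : (star h * h * (star h * h)) v = (star h * h) v := by
  refine apply_eq_apply_of_matrixCoeff_eq hR.mem_cyclicSubspace
    (mul_mem hR.mem_bicommutant hR.mem_bicommutant) hR.mem_bicommutant fun x => ?_
  have hone := congrFun (hR.matrixCoeff_pow 1) x
  have htwo := congrFun (hR.matrixCoeff_pow 2) x
  rw [pow_one] at hone
  rw [pow_two] at htwo
  rw [hone, htwo]
  by_cases hx2 : x ∈ (returnSet u (-γ) ∘ returnSet u γ)^[2] (Function.support m)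
  · rw [Set.indicator_of_mem hx2, Set.indicator_of_mem (hR.antitone_iterate one_le_two hx2)]
  · rw [Set.indicator_of_notMem hx2, ← hone, eq_comm]
    refine inner_apply_eq_zero_of_forall_pow (IsSelfAdjoint.star_mul_self h) fun n => ?_
    refine (congrFun (hR.matrixCoeff_pow (n + 2)) x).trans (Set.indicator_of_notMem ?_ m)
    exact fun hx => hx2 (hR.antitone_iterate (Nat.le_add_left 2 n) hx)

lemma norm_apply_eq : ‖h ((star h * h) v)‖ = ‖(star h * h) v‖ := by
  rw [← sq_eq_sq₀ (norm_nonneg _) (norm_nonneg _), ← inner_self_eq_norm_sq (𝕜 := ℂ),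
    ← inner_self_eq_norm_sq (𝕜 := ℂ), inner_apply_apply_eq, ← mul_apply_eq_comp (star h * h),
    hR.apply_sq]

lemma apply_eq : h ((star h * h) v) = h v := by
  rw [eq_comm, ← sub_eq_zero, ← map_sub, ← inner_self_eq_zero (𝕜 := ℂ), inner_apply_apply_eq,
    map_sub, ← mul_apply_eq_comp (star h * h), hR.apply_sq, sub_self, inner_zero_right]

lemma matrixCoeff_eq_indicator_returnSet :
    matrixCoeff U v w h = (returnSet u γ (Function.support m)).indicator m := by
  simpa only [mul_one] using hR.isWeakLimit.matrixCoeff_mul_eq_indicator (one_mem _)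
    hR.isReturnSeq subset_rfl hR.matrixCoeff_one_eq_indicator

lemma matrixCoeff_star_mul_self_eq : matrixCoeff U v w (star h * h) =
    (returnSet u (-γ) (returnSet u γ (Function.support m))).indicator m := by
  simpa only [mul_one] using
    hR.matrixCoeff_mul (one_mem _) subset_rfl hR.matrixCoeff_one_eq_indicator

/-- As `h` and `h⋆` commute, returning along `γ` and along `-γ` can be interchanged. -/
lemma returnSet_neg_returnSet_subset :
    returnSet u (-γ) (returnSet u γ (Function.support m)) ⊆
      returnSet u γ (Function.support m) := by
  have hmem := hR.isWeakLimit.mem_bicommutant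
  have hneg := hR.returnSet_neg_subset (S := Function.support m) subset_rfl
  have hstar := hR.isWeakLimit.star.matrixCoeff_mul_eq_indicator (one_mem _)
    hR.isReturnSeq_neg subset_rfl hR.matrixCoeff_one_eq_indicator
  have hT := hR.isWeakLimit.matrixCoeff_mul_eq_indicator
    (mul_mem (star_mem hmem) (one_mem _)) hR.isReturnSeq hneg hstar
  rw [mul_one, (commute_of_mem_bicommutant_of_mem_bicommutant hmem (star_mem hmem)).eq,
    hR.matrixCoeff_star_mul_self_eq] at hT
  have hsupp := congrArg Function.support hT
  rw [Set.support_indicator, Set.support_indicator,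
    Set.inter_eq_left.2 (hR.returnSet_neg_subset (hR.returnSet_subset subset_rfl))] at hsupp
  exact hsupp.subset.trans (Set.inter_subset_left.trans (returnSet_mono hneg))

lemma returnSet_subset_returnSet_neg_returnSet :
    returnSet u γ (Function.support m) ⊆
      returnSet u (-γ) (returnSet u γ (Function.support m)) := by
  have hmem := hR.isWeakLimit.mem_bicommutant
  have hsub := hR.returnSet_subset (S := Function.support m) subset_rfl
  have hTh : matrixCoeff U v w (star h * h * h) = matrixCoeff U v w h := by
    funext x
    rw [(commute_of_mem_bicommutant_of_mem_bicommutant hR.mem_bicommutant hmem).eq,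
      matrixCoeff_eq_inner (mul_mem hmem hR.mem_bicommutant), matrixCoeff_eq_inner hmem,
      mul_apply_eq_comp, hR.apply_eq]
  rw [hR.matrixCoeff_mul hmem hsub hR.matrixCoeff_eq_indicator_returnSet,
    hR.matrixCoeff_eq_indicator_returnSet] at hTh
  have hsupp := congrArg Function.support hTh
  rw [Set.support_indicator, Set.support_indicator, Set.inter_eq_left.2 hsub] at hsupp
  exact hsupp.superset.trans (Set.inter_subset_left.trans (returnSet_mono (returnSet_mono hsub)))

lemma matrixCoeff_star_mul_self :
    matrixCoeff U v w (star h * h) = (returnSet u γ (Function.support m)).indicator m := by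
  rw [hR.matrixCoeff_star_mul_self_eq,
    hR.returnSet_neg_returnSet_subset.antisymm hR.returnSet_subset_returnSet_neg_returnSet]

/-- The weak limit is a norm limit because `h` preserves the norm of `h⋆ h v`. -/
lemma tendsto_unitaryRep_apply :
    Tendsto (fun i => (U (γ i) : H →L[ℂ] H) ((star h * h) v)) u (𝓝 (h ((star h * h) v))) := by
  set a := (star h * h) v
  have hnorm : ‖h a‖ = ‖a‖ := hR.norm_apply_eq
  have hsq (i : ι) : ‖(U (γ i) : H →L[ℂ] H) a - h a‖ ^ 2 =
      2 * ‖h a‖ ^ 2 - 2 * RCLike.re ⟪h a, (U (γ i) : H →L[ℂ] H) a⟫_ℂ := by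
    rw [norm_sub_rev, norm_sub_sq (𝕜 := ℂ), Unitary.norm_map, ← hnorm]
    ring
  have hlim : Tendsto (fun i => ‖(U (γ i) : H →L[ℂ] H) a - h a‖ ^ 2) u (𝓝 0) := by
    have hre := (RCLike.continuous_re.tendsto _).comp (hR.isWeakLimit (h a) a)
    have hconst := (hre.const_mul 2).const_sub (2 * ‖h a‖ ^ 2)
    rw [inner_self_eq_norm_sq, sub_self] at hconst
    simpa only [hsq, Function.comp_apply] using hconst
  rw [tendsto_iff_norm_sub_tendsto_zero]
  simpa only [Real.sqrt_zero, Real.sqrt_sq (norm_nonneg _)] using hlim.sqrt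

end ReturnLimit

end ReturnProjection

section FourierStieltjes

open scoped InnerProductSpace

variable {V : Type*} [AddCommGroup V] {m : V → ℂ} {ι : Type*} {u : Ultrafilter ι} {γ : ι → V}

/-- A Fourier–Stieltjes function: a matrix coefficient of a unitary representation of `V` (taken
as a discrete group). -/
def IsFourierStieltjes (m : V → ℂ) : Prop :=
  ∃ (H : Type) (_ : NormedAddCommGroup H) (_ : InnerProductSpace ℂ H) (_ : CompleteSpace H)
    (U : AddChar V (unitary (H →L[ℂ] H))) (v w : H), matrixCoeff U v w 1 = m

namespace ReturnLimit

variable {H : Type*} [NormedAddCommGroup H] [InnerProductSpace ℂ H] [CompleteSpace H]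
  {U : AddChar V (unitary (H →L[ℂ] H))} {v w : H} {h h' : H →L[ℂ] H} {γ' : ι → V}

lemma exists_add_mem_returnSet_iff (hR : ReturnLimit U v w m u γ h) :
    ∃ I ∈ u, ∀ i ∈ I, ∀ j ∈ I, ∀ x,
      x + γ i ∈ returnSet u γ (Function.support m) ↔
        x + γ j ∈ returnSet u γ (Function.support m) := by
  obtain ⟨c, hc, hgap⟩ := hR.gap
  set A := returnSet u γ (Function.support m)
  set a := (star h * h) v
  let ε (i : ι) : ℝ := ‖w‖ * ‖(U (γ i) : H →L[ℂ] H) a - h a‖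
  have hε : Tendsto ε u (𝓝 0) := by
    simpa only [mul_zero] using
      (tendsto_iff_norm_sub_tendsto_zero.1 hR.tendsto_unitaryRep_apply).const_mul ‖w‖
  have hcoeff (x : V) (i : ι) : A.indicator m (x + γ i) =
      ⟪(U (-x) : H →L[ℂ] H) w, (U (γ i) : H →L[ℂ] H) a⟫_ℂ := by
    rw [← hR.matrixCoeff_star_mul_self, matrixCoeff_eq_inner hR.mem_bicommutant, neg_add_rev,
      AddChar.map_add_eq_mul, Submonoid.coe_mul, mul_apply_eq_comp, inner_unitaryRep_left, neg_neg]
  have hclose (x : V) (i : ι) :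
      ‖A.indicator m (x + γ i) - ⟪(U (-x) : H →L[ℂ] H) w, h a⟫_ℂ‖ ≤ ε i := by
    rw [hcoeff, ← inner_sub_right]
    exact (norm_inner_le_norm _ _).trans_eq (by rw [Unitary.norm_map])
  have himp {x : V} {i j : ι} (hi : ε i < c / 2) (hj : ε j < c / 2) (hx : x + γ i ∈ A) :
      x + γ j ∈ A := by
    by_contra hxj
    have hj' := hclose x j
    have hi' := hclose x i
    rw [Set.indicator_of_notMem hxj, zero_sub, norm_neg] at hj'
    rw [Set.indicator_of_mem hx] at hi'
    have hgapi := hgap _ (hR.returnSet_subset subset_rfl hx)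
    have htri := norm_sub_norm_le (m (x + γ i)) ⟪(U (-x) : H →L[ℂ] H) w, h a⟫_ℂ
    linarith
  exact ⟨{i | ε i < c / 2}, hε.eventually_lt_const (half_pos hc),
    fun i hi j hj x => ⟨himp hi hj, himp hj hi⟩⟩

lemma le_norm_apply (hR : ReturnLimit U v w m u γ h) {c : ℝ} (hgap : ∀ x, m x ≠ 0 → c ≤ ‖m x‖)
    (hne : (returnSet u γ (Function.support m)).Nonempty) : c ≤ ‖w‖ * ‖(star h * h) v‖ := by
  obtain ⟨x, hx⟩ := hne
  refine (hgap x (hR.returnSet_subset subset_rfl hx)).trans ?_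
  rw [← Set.indicator_of_mem hx m, ← hR.matrixCoeff_star_mul_self]
  exact norm_matrixCoeff_le hR.mem_bicommutant x

lemma inner_apply_self (hR : ReturnLimit U v w m u γ h) :
    ⟪(star h * h) v, v⟫_ℂ = (‖(star h * h) v‖ : ℂ) ^ 2 := by
  have hsymm (a b : H) : ⟪(star h * h) a, b⟫_ℂ = ⟪a, (star h * h) b⟫_ℂ :=
    (IsSelfAdjoint.star_mul_self h).isSymmetric a b
  refine Eq.trans ?_ (inner_self_eq_norm_sq_to_K (𝕜 := ℂ) ((star h * h) v))
  rw [hsymm v v, hsymm v ((star h * h) v), ← mul_apply_eq_comp (star h * h), hR.apply_sq]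

lemma mem_returnSet_of_matrixCoeff_mul_ne_zero (hR : ReturnLimit U v w m u γ h) {Z : H →L[ℂ] H}
    {S : Set V} (hZ : Z ∈ bicommutant U) (hS : S ⊆ Function.support m)
    (hZS : matrixCoeff U v w Z = S.indicator m) {x : V}
    (hx : matrixCoeff U v w (star h * h * Z) x ≠ 0) : x ∈ returnSet u γ (Function.support m) := by
  rw [hR.matrixCoeff_mul hZ hS hZS] at hx
  have hmem := returnSet_mono (returnSet_mono hS) (Set.mem_of_indicator_ne_zero hx)
  rw [Set.indicator_of_mem (Set.mem_of_indicator_ne_zero hx)] at hx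
  refine Set.mem_of_indicator_ne_zero (f := m) ?_
  rwa [← hR.matrixCoeff_star_mul_self, ← mul_one (star h * h),
    hR.matrixCoeff_mul (one_mem _) subset_rfl hR.matrixCoeff_one_eq_indicator,
    Set.indicator_of_mem hmem]

lemma inner_apply_eq_zero (hR : ReturnLimit U v w m u γ h) (hR' : ReturnLimit U v w m u γ' h')
    (hdisj : Disjoint (returnSet u γ (Function.support m)) (returnSet u γ' (Function.support m))) :
    ⟪(star h * h) v, (star h' * h') v⟫_ℂ = 0 := by
  have hzero : (star h * h * (star h' * h')) v = 0 := by
    refine apply_eq_zero_of_matrixCoeff_eq_zero hR.mem_cyclicSubspace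
      (mul_mem hR.mem_bicommutant hR'.mem_bicommutant) fun x => ?_
    by_contra hx
    refine hdisj.notMem_of_mem_left (hR.mem_returnSet_of_matrixCoeff_mul_ne_zero
      hR'.mem_bicommutant (hR'.returnSet_subset subset_rfl) hR'.matrixCoeff_star_mul_self hx) ?_
    rw [(commute_of_mem_bicommutant_of_mem_bicommutant hR.mem_bicommutant
      hR'.mem_bicommutant).eq] at hx
    exact hR'.mem_returnSet_of_matrixCoeff_mul_ne_zero
      hR.mem_bicommutant (hR.returnSet_subset subset_rfl) hR.matrixCoeff_star_mul_self hx
  refine ((IsSelfAdjoint.star_mul_self h).isSymmetric v _).trans ?_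
  exact (congrArg (inner ℂ v) hzero).trans (inner_zero_right v)

end ReturnLimit

lemma IsFourierStieltjes.exists_returnLimit (hm : IsFourierStieltjes m) {c : ℝ} (hc : 0 < c)
    (hgap : ∀ x, m x ≠ 0 → c ≤ ‖m x‖) (u : Ultrafilter ι) :
    ∃ (H : Type) (_ : NormedAddCommGroup H) (_ : InnerProductSpace ℂ H) (_ : CompleteSpace H)
      (U : AddChar V (unitary (H →L[ℂ] H))) (v w : H), ∀ γ : ι → V, IsReturnSeq u γ m →
        IsReturnSeq u (-γ) m → ∃ h, ReturnLimit U v w m u γ h := by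
  obtain ⟨H, _, _, _, U, v, w, rfl⟩ := hm
  obtain ⟨v', hv', heq⟩ := exists_mem_cyclicSubspace_matrixCoeff_one U v w
  refine ⟨H, _, _, ‹_›, U, v', w, fun γ hγ hγ' => ?_⟩
  obtain ⟨h, hh⟩ := IsWeakLimit.exists_isWeakLimit U u γ
  exact ⟨h, hv', heq, ⟨c, hc, hgap⟩, hγ, hγ', hh⟩

lemma IsFourierStieltjes.exists_add_mem_returnSet_iff (hm : IsFourierStieltjes m) {c : ℝ}
    (hc : 0 < c) (hgap : ∀ x, m x ≠ 0 → c ≤ ‖m x‖) (hγ : IsReturnSeq u γ m)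
    (hγ' : IsReturnSeq u (-γ) m) :
    ∃ I ∈ u, ∀ i ∈ I, ∀ j ∈ I, ∀ x,
      x + γ i ∈ returnSet u γ (Function.support m) ↔
        x + γ j ∈ returnSet u γ (Function.support m) := by
  obtain ⟨H, _, _, _, U, v, w, hlim⟩ := hm.exists_returnLimit hc hgap u
  obtain ⟨h, hR⟩ := hlim γ hγ hγ'
  exact hR.exists_add_mem_returnSet_iff

/-- Bessel's inequality for the mutually orthogonal vectors attached to disjoint return sets. -/
lemma IsFourierStieltjes.exists_card_le (hm : IsFourierStieltjes m) {c : ℝ} (hc : 0 < c)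
    (hgap : ∀ x, m x ≠ 0 → c ≤ ‖m x‖) (u : Ultrafilter ι) {κ : Type*} (γ : κ → ι → V)
    (hγ : ∀ k, IsReturnSeq u (γ k) m) (hγ' : ∀ k, IsReturnSeq u (-γ k) m)
    (hne : ∀ k, (returnSet u (γ k) (Function.support m)).Nonempty) :
    ∃ C : ℕ, ∀ s : Finset κ,
      (s : Set κ).PairwiseDisjoint (fun k => returnSet u (γ k) (Function.support m)) →
        s.card ≤ C := by
  obtain ⟨H, _, _, _, U, v, w, hlim⟩ := hm.exists_returnLimit hc hgap u
  choose h hR using fun k => hlim (γ k) (hγ k) (hγ' k)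
  let e (k : κ) : H := (star (h k) * h k) v
  have hle (k : κ) : c ≤ ‖w‖ * ‖e k‖ := (hR k).le_norm_apply hgap (hne k)
  have he (k : κ) : (‖e k‖ : ℂ) ≠ 0 := fun h0 => by
    have hck := hle k
    rw [Complex.ofReal_eq_zero.1 h0, mul_zero] at hck
    exact hc.not_ge hck
  refine ⟨⌈‖w‖ ^ 2 * ‖v‖ ^ 2 / c ^ 2⌉₊, fun s hs => Nat.cast_le.1 (le_trans ?_ (Nat.le_ceil _))⟩
  have horth : Orthonormal ℂ fun k : s => ((‖e k‖ : ℂ)⁻¹) • e k := by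
    refine ⟨fun k => norm_smul_inv_norm fun h0 => he k (by rw [h0, norm_zero, ofReal_zero]), ?_⟩
    intro k l hkl
    rw [inner_smul_left, inner_smul_right, (hR k).inner_apply_eq_zero (hR l)
      (hs k.2 l.2 (Subtype.coe_ne_coe.2 hkl)), mul_zero, mul_zero]
  have hinner (k : κ) : ⟪((‖e k‖ : ℂ)⁻¹) • e k, v⟫_ℂ = ‖e k‖ := by
    rw [inner_smul_left, (hR k).inner_apply_self, map_inv₀, Complex.conj_ofReal, pow_two,
      inv_mul_cancel_left₀ (he k)]
  have hbessel : ∑ k ∈ s, ‖e k‖ ^ 2 ≤ ‖v‖ ^ 2 := by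
    simpa only [hinner, Complex.norm_real, norm_norm, Finset.univ_eq_attach,
      Finset.sum_attach s fun k => ‖e k‖ ^ 2] using horth.sum_inner_products_le v (s := Finset.univ)
  rw [le_div_iff₀ (pow_pos hc 2)]
  calc (s.card : ℝ) * c ^ 2 = ∑ k ∈ s, c ^ 2 := by rw [Finset.sum_const, nsmul_eq_mul]
    _ ≤ ∑ k ∈ s, (‖w‖ * ‖e k‖) ^ 2 := by gcongr with k; exact hle k
    _ = ‖w‖ ^ 2 * ∑ k ∈ s, ‖e k‖ ^ 2 := by simp only [mul_pow, Finset.mul_sum]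
    _ ≤ ‖w‖ ^ 2 * ‖v‖ ^ 2 := by gcongr

end FourierStieltjes

section PositiveFunctionals

open scoped ComplexOrder BoundedContinuousFunction ComplexConjugate InnerProductSpace

lemma isFourierStieltjes_positiveLinearMap {V : Type*} [AddCommGroup V] {A : Type} [CStarAlgebra A]
    [PartialOrder A] [StarOrderedRing A] (f : A →ₚ[ℂ] ℂ) (e : AddChar V (unitary A)) (p : A) :
    IsFourierStieltjes fun x => f (star p * e x) := by
  let v : f.GNS := (f.toPreGNS 1 : f.PreGNS)
  have hv (a : A) : f.gnsStarAlgHom a v = (f.toPreGNS a : f.PreGNS) :=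
    f.gnsNonUnitalStarAlgHom_apply_coe.trans
      (congrArg (fun b => ((f.toPreGNS b : f.PreGNS) : f.GNS)) (mul_one a))
  refine ⟨f.GNS, inferInstance, inferInstance, inferInstance,
    (Unitary.map ⟨(f.gnsStarAlgHom : A →* _), map_star f.gnsStarAlgHom⟩).toMonoidHom.compAddChar e,
    v,
    f.gnsStarAlgHom p v, ?_⟩
  funext x
  change ⟪f.gnsStarAlgHom p v, f.gnsStarAlgHom (e x : A) v⟫_ℂ = _
  rw [hv, hv, UniformSpace.Completion.inner_coe, PositiveLinearMap.preGNS_inner_def]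
  rfl

lemma exists_positiveLinearMap_tendsto {A ι : Type*} [AddCommGroup A] [PartialOrder A]
    [IsOrderedAddMonoid A] [Module ℂ A] (u : Ultrafilter ι) (f : ι → A →ₚ[ℂ] ℂ)
    (hf : ∀ a, ∃ C, ∀ i, ‖f i a‖ ≤ C) :
    ∃ g : A →ₚ[ℂ] ℂ, ∀ a, Tendsto (fun i => f i a) u (𝓝 (g a)) := by
  choose C hC using hf
  choose g _ hg using fun a => exists_tendsto_of_norm_le u (hC a)
  let L : A →ₗ[ℂ] ℂ :=
    { toFun := g
      map_add' := fun a b => tendsto_nhds_unique (hg (a + b)) <| by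
        simpa only [map_add] using (hg a).add (hg b)
      map_smul' := fun z a => tendsto_nhds_unique (hg (z • a)) <| by
        simpa only [map_smul, RingHom.id_apply] using (hg a).const_smul z }
  exact ⟨PositiveLinearMap.mk₀ L fun a ha => ge_of_tendsto' (hg a) fun i => map_nonneg (f i) ha, hg⟩

variable {Ω X : Type*} [TopologicalSpace X]

lemma norm_ofReal_mul_boundedContinuousFunction_le (F : X →ᵇ ℂ) {r : ℝ} (hr : 0 ≤ r) (x : X) :
    ‖(r : ℂ) * F x‖ ≤ r * ‖F‖ := by
  rw [norm_mul, Complex.norm_of_nonneg hr]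
  exact mul_le_mul_of_nonneg_left (F.norm_coe_le_norm x) hr

variable [PartialOrder (X →ᵇ ℂ)] [StarOrderedRing (X →ᵇ ℂ)]

lemma exists_positiveLinearMap_eq_tsum {r : Ω → ℝ} (hr : ∀ ω, 0 ≤ r ω) (hs : Summable r)
    (g : Ω → X) : ∃ f : (X →ᵇ ℂ) →ₚ[ℂ] ℂ, ∀ F, f F = ∑' ω, (r ω : ℂ) * F (g ω) := by
  have hsum (F : X →ᵇ ℂ) : Summable fun ω => (r ω : ℂ) * F (g ω) :=
    .of_norm_bounded (hs.mul_right ‖F‖) fun ω =>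
      norm_ofReal_mul_boundedContinuousFunction_le F (hr ω) (g ω)
  let L : (X →ᵇ ℂ) →ₗ[ℂ] ℂ :=
    { toFun := fun F => ∑' ω, (r ω : ℂ) * F (g ω)
      map_add' := fun F G => by
        simp only [BoundedContinuousFunction.add_apply, mul_add, (hsum F).tsum_add (hsum G)]
      map_smul' := fun z F => by
        simp only [BoundedContinuousFunction.smul_apply, smul_eq_mul, mul_left_comm _ z,
          tsum_mul_left, RingHom.id_apply] }
  refine ⟨PositiveLinearMap.mk₀ L fun F hF => tsum_nonneg fun ω => ?_, fun F => rfl⟩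
  obtain ⟨G, rfl⟩ := CStarAlgebra.nonneg_iff_eq_star_mul_self.1 hF
  exact mul_nonneg (Complex.zero_le_real.2 (hr ω)) (star_mul_self_nonneg (G (g ω)))

end PositiveFunctionals

section CharacterSums

open scoped BoundedContinuousFunction ComplexConjugate

variable {V Ω : Type*} [AddCommGroup V]

/-- The unitaries of `Ω →ᵇ ℂ` given by evaluating a family of characters, `Ω` being discrete. -/
def evalUnitary [TopologicalSpace Ω] [DiscreteTopology Ω] (χ : Ω → AddChar V Circle) :
    AddChar V (unitary (Ω →ᵇ ℂ)) where
  toFun x :=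
    let F : Ω →ᵇ ℂ := .ofNormedAddCommGroup (fun ω => (χ ω x : ℂ)) continuous_of_discreteTopology 1
      fun ω => (Circle.norm_coe _).le
    have hF : F * star F = 1 := by
      ext ω
      exact (Complex.mul_conj _).trans (congrArg ofReal (Circle.normSq_coe (χ ω x)))
    ⟨F, Unitary.mem_iff.2 ⟨(mul_comm _ _).trans hF, hF⟩⟩
  map_zero_eq_one' := by
    ext ω
    exact congrArg ((↑) : Circle → ℂ) (χ ω).map_zero_eq_one
  map_add_eq_mul' x y := by
    ext ω
    exact congrArg ((↑) : Circle → ℂ) ((χ ω).map_add_eq_mul x y)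

lemma conj_conj_div_norm_mul (z : ℂ) : conj (conj (z / ‖z‖)) * ‖z‖ = z := by
  rw [Complex.conj_conj]
  rcases eq_or_ne z 0 with rfl | hz
  · rw [zero_div, zero_mul]
  · exact div_mul_cancel₀ z (Complex.ofReal_ne_zero.2 (norm_ne_zero_iff.2 hz))

/-- The ultralimit of the positive functionals `F ↦ ∑ ω, ‖a n ω‖ * F (ω, n)` on the bounded
functions on `Ω × ℕ` is represented by the GNS construction. -/
lemma IsFourierStieltjes.of_tendsto_tsum {Ω : Type} {χ : Ω → AddChar V Circle} {a : ℕ → Ω → ℂ}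
    {K : ℝ} (ha : ∀ n, Summable fun ω => ‖a n ω‖) (hK : ∀ n, ∑' ω, ‖a n ω‖ ≤ K) {m : V → ℂ}
    (hm : ∀ x, Tendsto (fun n => ∑' ω, a n ω * χ ω x) atTop (𝓝 (m x))) :
    IsFourierStieltjes m := by
  let _ : TopologicalSpace (Ω × ℕ) := ⊥
  have : DiscreteTopology (Ω × ℕ) := ⟨rfl⟩
  let _ : PartialOrder (Ω × ℕ →ᵇ ℂ) := CStarAlgebra.spectralOrder _
  have : StarOrderedRing (Ω × ℕ →ᵇ ℂ) := CStarAlgebra.spectralOrderedRing _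
  choose f hf using fun n => exists_positiveLinearMap_eq_tsum (fun ω => norm_nonneg (a n ω))
    (ha n) fun ω => (ω, n)
  have hbound (F : Ω × ℕ →ᵇ ℂ) (n : ℕ) : ‖f n F‖ ≤ K * ‖F‖ := by
    rw [hf]
    refine (tsum_of_norm_bounded ((ha n).mul_right ‖F‖).hasSum fun ω =>
      norm_ofReal_mul_boundedContinuousFunction_le F (norm_nonneg _) _).trans ?_
    rw [tsum_mul_right]
    exact mul_le_mul_of_nonneg_right (hK n) (norm_nonneg F)
  obtain ⟨g, hg⟩ := exists_positiveLinearMap_tendsto (hyperfilter ℕ) f fun F => ⟨_, hbound F⟩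
  let p : Ω × ℕ →ᵇ ℂ := .ofNormedAddCommGroup (fun q => conj (a q.2 q.1 / ‖a q.2 q.1‖))
    continuous_of_discreteTopology 1 fun q => by
      rw [RCLike.norm_conj, norm_div, Complex.norm_real, norm_norm]
      exact div_self_le_one _
  let e := evalUnitary fun q : Ω × ℕ => χ q.1
  convert isFourierStieltjes_positiveLinearMap g e p with x
  refine tendsto_nhds_unique ((hm x).mono_left Nat.hyperfilter_le_atTop)
    ((hg _).congr fun n => ?_)
  rw [hf]
  refine tsum_congr fun ω => ?_
  change (‖a n ω‖ : ℂ) * (conj (conj (a n ω / ‖a n ω‖)) * (χ ω x : ℂ)) = _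
  rw [← mul_assoc, mul_comm (‖a n ω‖ : ℂ), conj_conj_div_norm_mul]

end CharacterSums

section LatticeUnions

open scoped Pointwise

lemma finite_of_isBounded_of_le_dist {X : Type*} [PseudoMetricSpace X] [ProperSpace X] {s : Set X}
    {β : ℝ} (hβ : 0 < β) (hb : IsBounded s) (hs : s.Pairwise fun x y => β ≤ dist x y) :
    s.Finite := by
  obtain ⟨t, ht, hst⟩ := Metric.totallyBounded_iff.1
    (hb.isCompact_closure.totallyBounded.subset subset_closure) (β / 2) (half_pos hβ)
  have hex : ∀ x ∈ s, ∃ y ∈ t, dist x y < β / 2 := fun x hx => by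
    simpa only [Set.mem_iUnion, mem_ball, exists_prop] using hst hx
  choose! f hft hf using hex
  refine Set.Finite.of_injOn hft (fun x hx y hy hxy => ?_) ht
  by_contra hne
  have hx' := hf x hx
  rw [hxy] at hx'
  linarith [hs hx hy hne, dist_triangle_right x y (f y), hf y hy]

lemma exists_basis_mem_of_span_eq_top {K E : Type*} [DivisionRing K] [AddCommGroup E] [Module K E]
    [Module.Finite K E] {n : ℕ} (hn : Module.finrank K E = n) {S : Set E}
    (hS : Submodule.span K S = ⊤) : ∃ b : Module.Basis (Fin n) K E, ∀ i, b i ∈ S := by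
  let b := Module.Basis.ofSpan hS.ge
  have := FiniteDimensional.fintypeBasisIndex b
  let e := Fintype.equivFinOfCardEq ((Module.finrank_eq_card_basis b).symm.trans hn)
  refine ⟨b.reindex e, fun i => Module.Basis.ofSpan_subset hS.ge ?_⟩
  rw [Module.Basis.reindex_apply]
  exact Set.mem_range_self _

/-- The operator `T` such that `T ℤ^d` is the lattice generated by the basis `b`. -/
def latticeEquiv (b : Module.Basis (Fin d) ℝ (Ed d)) : Ed d ≃ₗ[ℝ] Ed d :=
  (WithLp.linearEquiv 2 ℝ (Fin d → ℝ)).trans b.equivFun.symm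

lemma latticeEquiv_apply (b : Module.Basis (Fin d) ℝ (Ed d)) (x : Ed d) :
    latticeEquiv b x = ∑ i, x i • b i :=
  b.equivFun_symm_apply x.ofLp

lemma mem_latt_latticeEquiv_iff {b : Module.Basis (Fin d) ℝ (Ed d)} {l x : Ed d} :
    x ∈ latt (latticeEquiv b) l ↔ x - l ∈ Submodule.span ℤ (Set.range b) := by
  simp only [latt, Set.mem_ofPred_eq, latticeEquiv_apply, Submodule.mem_span_range_iff_exists_fun,
    ← sub_eq_iff_eq_add, eq_comm (b := x - l)]
  simp [Int.cast_smul_eq_zsmul]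

lemma self_mem_latt (T : Ed d ≃ₗ[ℝ] Ed d) (l : Ed d) : l ∈ latt T l :=
  ⟨0, by simp [← Pi.zero_def]⟩

/-- A finite union of pairwise disjoint translated lattices. -/
def IsLatticeUnion (A : Set (Ed d)) : Prop :=
  ∃ (N : ℕ) (l : Fin N → Ed d) (T : Fin N → (Ed d ≃ₗ[ℝ] Ed d)),
    A = ⋃ j, latt (T j) (l j) ∧ Pairwise (Function.onFun Disjoint fun j => latt (T j) (l j))

lemma IsLatticeUnion.of_finite {ι : Type*} [Finite ι] (l : ι → Ed d) (T : ι → (Ed d ≃ₗ[ℝ] Ed d))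
    (hdisj : Pairwise (Function.onFun Disjoint fun j => latt (T j) (l j))) :
    IsLatticeUnion (⋃ j, latt (T j) (l j)) := by
  obtain ⟨N, ⟨e⟩⟩ := Finite.exists_equiv_fin ι
  exact ⟨N, l ∘ e.symm, T ∘ e.symm, (e.symm.surjective.iUnion_comp _).symm,
    hdisj.comp_of_injective e.symm.injective⟩

lemma IsLatticeUnion.sUnion {S : Set (Set (Ed d))} (hfin : S.Finite) (hdisj : S.PairwiseDisjoint id)
    (h : ∀ A ∈ S, IsLatticeUnion A) : IsLatticeUnion (⋃₀ S) := by
  have := hfin.to_subtype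
  choose N l T hA hlat using fun A : S => h A A.2
  have hsub (A : S) (j : Fin (N A)) : latt (T A j) (l A j) ⊆ A := by
    rw [hA A]
    exact Set.subset_iUnion (fun j => latt (T A j) (l A j)) j
  convert IsLatticeUnion.of_finite (ι := Σ A : S, Fin (N A)) (fun j => l j.1 j.2)
    (fun j => T j.1 j.2) ?_ using 1
  · rw [Set.sUnion_eq_iUnion, Set.iUnion_sigma]
    exact Set.iUnion_congr hA
  · rintro ⟨A, i⟩ ⟨B, j⟩ hne
    rcases eq_or_ne A B with rfl | hAB
    · exact hlat A fun hij => hne (congrArg _ hij)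
    · exact (hdisj A.2 B.2 (Subtype.coe_ne_coe.2 hAB)).mono (hsub A i) (hsub B j)

/-- A separated set is the union of the translated lattices of periods through its points in a
fundamental domain. -/
lemma isLatticeUnion_of_span_stabilizer {A : Set (Ed d)} {β : ℝ} (hβ : 0 < β)
    (hA : A.Pairwise fun x y => β ≤ dist x y)
    (hspan : Submodule.span ℝ (AddAction.stabilizer (Ed d) A : Set (Ed d)) = ⊤) :
    IsLatticeUnion A := by
  obtain ⟨b, hb⟩ := exists_basis_mem_of_span_eq_top finrank_euclideanSpace_fin hspan
  have hper {p x : Ed d} (hp : p ∈ Submodule.span ℤ (Set.range b)) (hx : x ∈ A) : p + x ∈ A := by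
    have hle : Submodule.span ℤ (Set.range b) ≤
        AddSubgroup.toIntSubmodule (AddAction.stabilizer (Ed d) A) :=
      Submodule.span_le.2 (Set.range_subset_iff.2 hb)
    rw [← AddAction.mem_stabilizer_iff.1 (hle hp)]
    exact Set.vadd_mem_vadd_set hx
  let D := A ∩ ZSpan.fundamentalDomain b
  have : Finite D := finite_of_isBounded_of_le_dist hβ
    ((ZSpan.fundamentalDomain_isBounded b).subset Set.inter_subset_right)
    (hA.mono Set.inter_subset_left)
  convert IsLatticeUnion.of_finite (fun a : D => (a : Ed d)) (fun _ => latticeEquiv b) ?_ using 1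
  · ext x
    simp only [Set.mem_iUnion, mem_latt_latticeEquiv_iff]
    refine ⟨fun hx => ⟨⟨ZSpan.fract b x, ?_, ZSpan.fract_mem_fundamentalDomain b x⟩, ?_⟩, ?_⟩
    · rw [ZSpan.fract_apply, sub_eq_neg_add]
      exact hper (neg_mem (ZSpan.floor b x).2) hx
    · exact (sub_sub_cancel x _).symm ▸ (ZSpan.floor b x).2
    · rintro ⟨a, ha⟩
      rw [← sub_add_cancel x a]
      exact hper ha a.2.1
  · refine fun a a' hne => Set.disjoint_left.2 fun x hx hx' => hne (Subtype.ext ?_)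
    rw [mem_latt_latticeEquiv_iff] at hx hx'
    rw [← ZSpan.fract_eq_self.2 a.2.2, ← ZSpan.fract_eq_self.2 a'.2.2, ZSpan.fract_eq_fract]
    convert sub_mem hx hx' using 1
    abel

end LatticeUnions

section Recurrence

variable {E : Type*} [NormedAddCommGroup E] {m : E → ℂ} {β : ℝ} {τ : ℕ → E}

lemma exists_inter_ball_subset_singleton (hβ : 0 < β) {s : Set E}
    (hs : s.Pairwise fun x y => β ≤ dist x y) (x : E) :
    ∃ r > 0, r ≤ β / 2 ∧ s ∩ ball x r ⊆ {x} := by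
  by_cases h : ∃ y ∈ s, y ≠ x ∧ dist y x < β / 2
  · obtain ⟨y, hy, hyx, hdist⟩ := h
    refine ⟨dist y x, dist_pos.2 hyx, hdist.le, fun z hz => ?_⟩
    have hzx : dist z x < dist y x := hz.2
    have hzy : z ≠ y := by
      rintro rfl
      exact hzx.false
    linarith [hs hz.1 hy hzy, dist_triangle_right z y x]
  · push Not at h
    refine ⟨β / 2, half_pos hβ, le_rfl, fun z hz => ?_⟩
    by_contra hzx
    exact (h z hz.1 hzx).not_gt hz.2

lemma exists_contDiffBump_inter_ball_subset_singleton (hβ : 0 < β)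
    (hsep : (Function.support m).Pairwise fun x y => β ≤ dist x y) (x : E) {r : ℝ} (hr : 0 < r) :
    ∃ f : ContDiffBump x, f.rOut ≤ r ∧ f.rOut ≤ β / 2 ∧
      Function.support m ∩ ball x f.rOut ⊆ {x} := by
  obtain ⟨ρ, hρ, hρβ, hball⟩ := exists_inter_ball_subset_singleton hβ hsep x
  have hmin : 0 < min r ρ := lt_min hr hρ
  exact ⟨⟨min r ρ / 2, min r ρ, half_pos hmin, half_lt_self hmin⟩, min_le_left r ρ,
    (min_le_right r ρ).trans hρβ, fun y hy => hball ⟨hy.1, hy.2.trans_le (min_le_right r ρ)⟩⟩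

variable [NormedSpace ℝ E]

/-- The translates of the measure with masses `m` by `τ k` converge vaguely to this measure. -/
def IsRecurrent (m : E → ℂ) (τ : ℕ → E) : Prop :=
  ∀ φ : 𝓢(E, ℂ), HasCompactSupport φ →
    Tendsto (fun k => ∑' y, m y * φ (y - τ k)) atTop (𝓝 (∑' y, m y * φ y))

variable [FiniteDimensional ℝ E]

/-- A smooth bump function, as a complex valued Schwartz function. -/
def bumpSchwartz {x : E} (f : ContDiffBump x) [HasContDiffBump E] : 𝓢(E, ℂ) :=
  HasCompactSupport.toSchwartzMap (f := fun y => (f y : ℂ))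
    (f.hasCompactSupport.comp_left ofReal_zero) (ofRealCLM.contDiff.comp f.contDiff)

variable [HasContDiffBump E] {x : E} (f : ContDiffBump x)

lemma bumpSchwartz_apply (y : E) : bumpSchwartz f y = f y := rfl

lemma hasCompactSupport_bumpSchwartz : HasCompactSupport (bumpSchwartz f) :=
  f.hasCompactSupport.comp_left ofReal_zero

lemma bumpSchwartz_self : bumpSchwartz f x = 1 := by
  rw [bumpSchwartz_apply, f.one_of_mem_closedBall (mem_closedBall_self f.rIn_pos.le), ofReal_one]

lemma tsum_mul_bumpSchwartz {z w : E} (hw : Function.support m ∩ ball (x + z) f.rOut ⊆ {w}) :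
    ∑' y, m y * bumpSchwartz f (y - z) = m w * bumpSchwartz f (w - z) := by
  refine tsum_eq_single w fun y hy => ?_
  rcases eq_or_ne (m y) 0 with h0 | hne
  · rw [h0, zero_mul]
  · have hball : y ∉ ball (x + z) f.rOut := fun hyb => hy (hw ⟨hne, hyb⟩)
    rw [bumpSchwartz_apply, f.zero_of_le_dist, ofReal_zero, mul_zero]
    rwa [mem_ball, not_lt, dist_eq_norm, add_comm, ← sub_sub, ← dist_eq_norm] at hball

lemma tsum_mul_bumpSchwartz_eq_zero {z : E}
    (hz : ∀ y ∈ Function.support m, f.rOut ≤ dist y (x + z)) :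
    ∑' y, m y * bumpSchwartz f (y - z) = 0 := by
  have h0 : m (x + z) = 0 := by
    by_contra hne
    exact ((hz _ hne).trans_eq (dist_self _)).not_gt f.rOut_pos
  rw [tsum_mul_bumpSchwartz f fun y hy => absurd hy.2 (hz y hy.1).not_gt, h0, zero_mul]

namespace IsRecurrent

lemma tendsto_tsum_mul_bumpSchwartz (hτ : IsRecurrent m τ)
    (hball : Function.support m ∩ ball x f.rOut ⊆ {x}) :
    Tendsto (fun k => ∑' y, m y * bumpSchwartz f (y - τ k)) atTop (𝓝 (m x)) := by
  have hlim := hτ _ (hasCompactSupport_bumpSchwartz f)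
  have hx := tsum_mul_bumpSchwartz (m := m) f (z := 0) (w := x) (by rwa [add_zero])
  simp only [sub_zero, bumpSchwartz_self, mul_one] at hx
  rwa [hx] at hlim

omit f in
lemma eventually_exists_dist_lt (hτ : IsRecurrent m τ) (hβ : 0 < β)
    (hsep : (Function.support m).Pairwise fun x y => β ≤ dist x y) (hx : m x ≠ 0) {r : ℝ}
    (hr : 0 < r) : ∀ᶠ k in atTop, ∃ y ∈ Function.support m, dist y (x + τ k) < r := by
  obtain ⟨f, hfr, -, hball⟩ := exists_contDiffBump_inter_ball_subset_singleton hβ hsep x hr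
  filter_upwards [(hτ.tendsto_tsum_mul_bumpSchwartz f hball).eventually_ne hx] with k hk
  contrapose! hk
  exact tsum_mul_bumpSchwartz_eq_zero f fun y hy => hfr.trans (hk y hy)

omit f in
lemma exists_tendsto_sub (hτ : IsRecurrent m τ) (hβ : 0 < β)
    (hsep : (Function.support m).Pairwise fun x y => β ≤ dist x y) (hx : m x ≠ 0) :
    ∃ γ : ℕ → E, (∀ k, m (x + γ k) ≠ 0) ∧ Tendsto (γ - τ) atTop (𝓝 0) := by
  have hnear (k : ℕ) : ∃ y ∈ Function.support m,
      dist (x + τ k) y < infDist (x + τ k) (Function.support m) + 1 / (k + 1) :=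
    (infDist_lt_iff ⟨x, hx⟩).1 (lt_add_of_pos_right _ Nat.one_div_pos_of_nat)
  choose y hy hdist using hnear
  have hinf : Tendsto (fun k => infDist (x + τ k) (Function.support m)) atTop (𝓝 0) := by
    refine Metric.tendsto_nhds.2 fun r hr => ?_
    filter_upwards [hτ.eventually_exists_dist_lt hβ hsep hx hr] with k ⟨z, hz, hzr⟩
    rw [Real.dist_0_eq_abs, abs_of_nonneg infDist_nonneg]
    exact (infDist_le_dist_of_mem hz).trans_lt (by rwa [dist_comm])
  refine ⟨fun k => y k - x, fun k => by rw [add_sub_cancel]; exact hy k, ?_⟩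
  refine squeeze_zero_norm (fun k => ?_)
    (by simpa only [add_zero] using hinf.add tendsto_one_div_add_atTop_nhds_zero_nat)
  rw [Pi.sub_apply, sub_sub, norm_sub_rev, ← dist_eq_norm]
  exact (hdist k).le

omit f in
lemma isReturnSeq (hτ : IsRecurrent m τ) (hβ : 0 < β)
    (hsep : (Function.support m).Pairwise fun x y => β ≤ dist x y) {u : Ultrafilter ℕ}
    (hu : u ≤ (atTop : Filter ℕ)) {γ : ℕ → E} (hγ : Tendsto (γ - τ) u (𝓝 0)) :
    IsReturnSeq u γ m := by
  intro x hx
  obtain ⟨f, -, hfβ, hball⟩ :=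
    exists_contDiffBump_inter_ball_subset_singleton hβ hsep x (half_pos hβ)
  refine ((hτ.tendsto_tsum_mul_bumpSchwartz f hball).mono_left hu).congr' ?_
  filter_upwards [hx, hγ.eventually (ball_mem_nhds 0 f.rIn_pos)] with k hk hγk
  have hdist : dist (x + γ k) (x + τ k) < f.rIn := by
    rwa [dist_add_left, dist_eq_norm, ← Pi.sub_apply, ← mem_ball_zero_iff]
  rw [tsum_mul_bumpSchwartz f (w := x + γ k), bumpSchwartz_apply, f.one_of_mem_closedBall,
    ofReal_one, mul_one]
  · rw [mem_closedBall, dist_eq_norm, sub_sub, add_comm (τ k) x, ← dist_eq_norm]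
    exact hdist.le
  · rintro y ⟨hy, hyball⟩
    by_contra hne
    have hβy := hsep hy hk hne
    have hyr : dist y (x + τ k) < f.rOut := hyball
    linarith [dist_triangle_right y (x + γ k) (x + τ k), f.rIn_lt_rOut]

end IsRecurrent

end Recurrence

section RecurrentSupport

lemma returnSet_congr {V ι : Type*} [AddCommGroup V] {u : Ultrafilter ι} {γ γ' : ι → V} {S : Set V}
    (h : γ =ᶠ[u] γ') : returnSet u γ S = returnSet u γ' S :=
  Set.ext fun _ => eventually_congr (h.mono fun _ hi => by rw [hi])

lemma returnSet_eq_of_not_disjoint {V ι : Type*} [NormedAddCommGroup V] {u : Ultrafilter ι}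
    {γ γ' τ : ι → V} {S : Set V} {β : ℝ} (hβ : 0 < β) (hS : S.Pairwise fun x y => β ≤ dist x y)
    (hγ : Tendsto (γ - τ) u (𝓝 0)) (hγ' : Tendsto (γ' - τ) u (𝓝 0))
    (h : ¬Disjoint (returnSet u γ S) (returnSet u γ' S)) : returnSet u γ S = returnSet u γ' S := by
  obtain ⟨x, hx, hx'⟩ := Set.not_disjoint_iff.1 h
  have hclose : ∀ᶠ i in u, dist (x + γ i) (x + γ' i) < β := by
    have hsub := (hγ.sub hγ').norm.eventually_lt_const (by rwa [sub_zero, norm_zero])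
    filter_upwards [hsub] with i hi
    rwa [dist_add_left, dist_eq_norm, ← sub_sub_sub_cancel_right _ _ (τ i)]
  refine returnSet_congr ?_
  filter_upwards [hx, hx', hclose] with i hi hi' hlt
  exact add_left_cancel (hS.eq hi hi' hlt.not_ge)

lemma span_eq_top_of_tendsto_abs_inner {F ι : Type*} [NormedAddCommGroup F] [InnerProductSpace ℝ F]
    [FiniteDimensional ℝ F] {u : Filter ι} [u.NeBot] {γ τ : ι → F} {s : Set F} {I : Set ι}
    (hI : I ∈ u) (hs : ∀ i ∈ I, ∀ j ∈ I, γ i - γ j ∈ s) (hγ : Tendsto (γ - τ) u (𝓝 0))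
    (hτ : ∀ z ≠ 0, Tendsto (fun i => |⟪z, τ i⟫|) u atTop) : Submodule.span ℝ s = ⊤ := by
  rw [← Submodule.orthogonal_eq_bot_iff, Submodule.eq_bot_iff]
  intro z hz
  by_contra hz0
  obtain ⟨j, hj⟩ := nonempty_of_mem hI
  have hconst (i : ι) (hi : i ∈ I) : ⟪z, γ i⟫ = ⟪z, γ j⟫ := by
    rw [← sub_eq_zero, ← inner_sub_right, real_inner_comm]
    exact Submodule.mem_orthogonal _ _ |>.1 hz _ (Submodule.subset_span (hs i hi j hj))
  have hdiff : Tendsto (fun i => ⟪z, (γ - τ) i⟫) u (𝓝 0) := by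
    simpa only [inner_zero_right] using tendsto_const_nhds.inner hγ
  have hlim : Tendsto (fun i => |⟪z, τ i⟫|) u (𝓝 |⟪z, γ j⟫|) := by
    refine Tendsto.abs ?_
    rw [← sub_zero ⟪z, γ j⟫]
    refine (tendsto_const_nhds.sub hdiff).congr' ?_
    filter_upwards [hI] with i hi
    rw [← hconst i hi, ← inner_sub_right, Pi.sub_apply, sub_sub_cancel]
  exact not_tendsto_nhds_of_tendsto_atTop (hτ z hz0) _ hlim

variable {E : Type*} [NormedAddCommGroup E] [NormedSpace ℝ E] [FiniteDimensional ℝ E]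
  [HasContDiffBump E] {m : E → ℂ} {β c : ℝ} {τ : ℕ → E}

lemma IsFourierStieltjes.exists_finite_returnSet (hm : IsFourierStieltjes m) (hc : 0 < c)
    (hgap : ∀ x, m x ≠ 0 → c ≤ ‖m x‖) (hβ : 0 < β)
    (hsep : (Function.support m).Pairwise fun x y => β ≤ dist x y) (hτ : IsRecurrent m τ)
    (hτ' : IsRecurrent m (-τ)) {u : Ultrafilter ℕ} (hu : u ≤ (atTop : Filter ℕ)) :
    ∃ S : Set (Set E), S.Finite ∧ S.PairwiseDisjoint id ∧ ⋃₀ S = Function.support m ∧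
      ∀ A ∈ S, ∃ γ : ℕ → E, IsReturnSeq u γ m ∧ IsReturnSeq u (-γ) m ∧
        Tendsto (γ - τ) u (𝓝 0) ∧ A = returnSet u γ (Function.support m) := by
  have hexists (l : Function.support m) := hτ.exists_tendsto_sub hβ hsep l.2
  choose γ hmem hlim using hexists
  have hγ (l : Function.support m) : Tendsto (γ l - τ) u (𝓝 0) := (hlim l).mono_left hu
  have hneg (l : Function.support m) : Tendsto (-γ l - -τ) u (𝓝 0) := by
    rw [neg_sub_neg, ← neg_sub, ← neg_zero]
    exact (hγ l).neg
  have hret (l : Function.support m) : IsReturnSeq u (γ l) m := hτ.isReturnSeq hβ hsep hu (hγ l)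
  have hret' (l : Function.support m) : IsReturnSeq u (-γ l) m :=
    hτ'.isReturnSeq hβ hsep hu (hneg l)
  let A (l : Function.support m) : Set E := returnSet u (γ l) (Function.support m)
  have hself (l : Function.support m) : (l : E) ∈ A l := Eventually.of_forall (hmem l)
  have hdisj : (Set.range A).PairwiseDisjoint id := by
    rintro _ ⟨l, rfl⟩ _ ⟨l', rfl⟩ hne
    by_contra hmeet
    exact hne (returnSet_eq_of_not_disjoint hβ hsep (hγ l) (hγ l') hmeet)
  refine ⟨Set.range A, ?_, hdisj, subset_antisymm ?_ fun l hl => ?_, ?_⟩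
  · obtain ⟨C, hC⟩ := hm.exists_card_le hc hgap u (fun B : Set.range A => γ B.2.choose)
      (fun B => hret _) (fun B => hret' _) fun B => ⟨_, hself B.2.choose⟩
    by_contra hinf
    have : Infinite (Set.range A) := Set.infinite_coe_iff.2 hinf
    obtain ⟨s, hs⟩ := Infinite.exists_subset_card_eq (Set.range A) (C + 1)
    refine (Nat.lt_succ_self C).not_ge (hs.symm.trans_le (hC s fun B _ B' _ hne => ?_))
    have hBB' := hdisj B.2 B'.2 (Subtype.coe_ne_coe.2 hne)
    rwa [← B.2.choose_spec, ← B'.2.choose_spec] at hBB'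
  · rintro x ⟨_, ⟨l, rfl⟩, hx⟩
    exact (hret l).returnSet_subset_support hc hgap subset_rfl hx
  · exact ⟨A ⟨l, hl⟩, ⟨_, rfl⟩, hself ⟨l, hl⟩⟩
  · rintro _ ⟨l, rfl⟩
    exact ⟨γ l, hret l, hret' l, hγ l, rfl⟩

open Pointwise in
theorem IsFourierStieltjes.isLatticeUnion_support {m : Ed d → ℂ} {τ : ℕ → Ed d}
    (hm : IsFourierStieltjes m) (hc : 0 < c) (hgap : ∀ x, m x ≠ 0 → c ≤ ‖m x‖) (hβ : 0 < β)
    (hsep : (Function.support m).Pairwise fun x y => β ≤ dist x y) (hτ : IsRecurrent m τ)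
    (hτ' : IsRecurrent m (-τ)) (hdir : ∀ z ≠ 0, Tendsto (fun k => |⟪z, τ k⟫|) atTop atTop) :
    IsLatticeUnion (Function.support m) := by
  have hu := Nat.hyperfilter_le_atTop
  obtain ⟨S, hfin, hdisj, hS, hclass⟩ := hm.exists_finite_returnSet hc hgap hβ hsep hτ hτ' hu
  rw [← hS] at hsep ⊢
  refine IsLatticeUnion.sUnion hfin hdisj fun A hA => ?_
  refine isLatticeUnion_of_span_stabilizer hβ (hsep.mono (Set.subset_sUnion_of_mem hA)) ?_
  obtain ⟨γ, hγ, hγ', hlim, rfl⟩ := hclass A hA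
  obtain ⟨I, hI, hiff⟩ := hm.exists_add_mem_returnSet_iff hc hgap hγ hγ'
  refine span_eq_top_of_tendsto_abs_inner hI (fun i hi j hj => ?_) hlim
    fun z hz => (hdir z hz).mono_left hu
  rw [SetLike.mem_coe, AddAction.mem_stabilizer_set]
  intro x
  have hx := hiff i hi j hj (x - γ j)
  rwa [sub_add_cancel, sub_add_eq_add_sub, ← add_sub_assoc', add_comm] at hx

end RecurrentSupport

section Growth

open scoped NNReal

variable {V : Type*} [SeminormedAddCommGroup V]

lemma mul_ofReal_inv_pow_le_tsum_indicator (f : V → ℝ≥0∞) (k : ℕ) {r : ℝ} (hr : 0 < r) (x : V) :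
    f x * ENNReal.ofReal (((1 + ‖x‖ / r) ^ k)⁻¹) ≤
      ∑' n : ℕ, 2⁻¹ ^ (n * k) * (ball 0 (2 ^ (n + 1) * r)).indicator f x := by
  have hx : 0 ≤ ‖x‖ / r := div_nonneg (norm_nonneg x) hr.le
  obtain ⟨n, hn, hn'⟩ := exists_nat_pow_near (le_add_of_nonneg_right hx) (one_lt_two (α := ℝ))
  have hball : x ∈ ball (0 : V) (2 ^ (n + 1) * r) := by
    rw [mem_ball_zero_iff, ← div_lt_iff₀ hr]
    exact (lt_one_add _).trans hn'
  have hweight : ENNReal.ofReal (((1 + ‖x‖ / r) ^ k)⁻¹) ≤ 2⁻¹ ^ (n * k) := by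
    have h2 : ENNReal.ofReal ((((2 : ℝ) ^ n) ^ k)⁻¹) = 2⁻¹ ^ (n * k) := by
      rw [← pow_mul, ← inv_pow, ENNReal.ofReal_pow (by positivity),
        ENNReal.ofReal_inv_of_pos two_pos, ENNReal.ofReal_ofNat]
    rw [← h2]
    gcongr
  refine le_trans ?_ (ENNReal.le_tsum n)
  rw [Set.indicator_of_mem hball, mul_comm]
  gcongr

lemma tsum_mul_ofReal_inv_pow_le {f : V → ℝ≥0∞} {K : ℝ≥0∞} {k : ℕ} {r₀ : ℝ}
    (h : ∀ r ≥ r₀, ∑' x, (ball 0 r).indicator f x ≤ K * ENNReal.ofReal r ^ k) {r : ℝ} (hr : 0 < r)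
    (hr₀ : r₀ ≤ r) :
    ∑' x, f x * ENNReal.ofReal (((1 + ‖x‖ / r) ^ (k + 1))⁻¹) ≤
      2 ^ (k + 1) * K * ENNReal.ofReal r ^ k := by
  have hgeom (n : ℕ) : (2⁻¹ : ℝ≥0∞) ^ (n * (k + 1)) * (2 ^ (n + 1)) ^ k = 2 ^ k * 2⁻¹ ^ n := by
    rw [Nat.mul_succ, pow_add, ← pow_mul, Nat.succ_mul, pow_add, mul_mul_mul_comm, ← mul_pow,
      ENNReal.inv_mul_cancel two_ne_zero ENNReal.ofNat_ne_top, one_pow, one_mul, mul_comm]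
  calc ∑' x, f x * ENNReal.ofReal (((1 + ‖x‖ / r) ^ (k + 1))⁻¹)
      ≤ ∑' x, ∑' n : ℕ, 2⁻¹ ^ (n * (k + 1)) * (ball 0 (2 ^ (n + 1) * r)).indicator f x :=
        ENNReal.tsum_le_tsum fun x => mul_ofReal_inv_pow_le_tsum_indicator f _ hr x
    _ = ∑' n : ℕ, 2⁻¹ ^ (n * (k + 1)) * ∑' x, (ball 0 (2 ^ (n + 1) * r)).indicator f x := by
        rw [ENNReal.tsum_comm]
        simp only [ENNReal.tsum_mul_left]
    _ ≤ ∑' n : ℕ, 2⁻¹ ^ (n * (k + 1)) * (K * ENNReal.ofReal (2 ^ (n + 1) * r) ^ k) := by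
        gcongr with n
        exact h _ (hr₀.trans (le_mul_of_one_le_left hr.le (one_le_pow₀ one_le_two)))
    _ = ∑' n : ℕ, 2 ^ k * K * ENNReal.ofReal r ^ k * 2⁻¹ ^ n := by
        refine tsum_congr fun n => ?_
        rw [ENNReal.ofReal_mul (by positivity), ENNReal.ofReal_pow zero_le_two,
          ENNReal.ofReal_ofNat, mul_pow, mul_left_comm, ← mul_assoc (2⁻¹ ^ _), hgeom]
        ring
    _ = 2 ^ (k + 1) * K * ENNReal.ofReal r ^ k := by
        rw [ENNReal.tsum_mul_left, ENNReal.tsum_geometric, ENNReal.one_sub_inv_two, inv_inv]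
        ring

/-- The measure with masses `m` integrates absolutely a negative power of `1 + ‖x‖`. -/
def IsPolynomiallyBounded (m : V → ℂ) : Prop :=
  ∃ k : ℕ, Summable fun x => ‖m x‖ * ((1 + ‖x‖) ^ k)⁻¹

/-- The total variation of the ball of radius `r` in the measure with masses `m` is `O(r ^ k)`. -/
def HasBallGrowth (m : V → ℂ) (k : ℕ) : Prop :=
  ∃ C : ℝ≥0, ∀ᶠ r in atTop, ∑' x, (ball 0 r).indicator (fun y => ‖m y‖ₑ) x ≤
    C * ENNReal.ofReal r ^ k

lemma summable_norm_of_tsum_enorm_le {ι F : Type*} [SeminormedAddCommGroup F] {f : ι → F} {K : ℝ≥0}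
    (h : ∑' i, ‖f i‖ₑ ≤ K) : Summable (fun i => ‖f i‖) ∧ ∑' i, ‖f i‖ ≤ K := by
  have htop : ∑' i, ‖f i‖ₑ ≠ ⊤ := ne_top_of_le_ne_top ENNReal.coe_ne_top h
  have hsum : Summable fun i => ‖f i‖ := by
    simpa only [toReal_enorm] using ENNReal.summable_toReal htop
  refine ⟨hsum, ?_⟩
  have htsum : ∑' i, ‖f i‖ = (∑' i, ‖f i‖ₑ).toReal := by
    simp only [ENNReal.tsum_toReal_eq fun _ => enorm_ne_top, toReal_enorm]
  rw [htsum]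
  exact ENNReal.toReal_le_coe_of_le_coe h

lemma enorm_mul_ofReal_eq {z : ℂ} {a : ℝ} (ha : 0 ≤ a) : ‖z‖ₑ * ENNReal.ofReal a = ‖‖z‖ * a‖ₑ := by
  rw [enorm_mul, enorm_norm, Real.enorm_of_nonneg ha]

namespace HasBallGrowth

variable {m : V → ℂ} {k : ℕ}

lemma exists_tsum_le (h : HasBallGrowth m k) : ∃ K : ℝ≥0, ∀ᶠ r : ℝ in atTop, 0 < r ∧
    (Summable fun x => ‖m x‖ * ((1 + ‖x‖ / r) ^ (k + 1))⁻¹) ∧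
      ∑' x, ‖m x‖ * ((1 + ‖x‖ / r) ^ (k + 1))⁻¹ ≤ K * r ^ k := by
  obtain ⟨C, hC⟩ := h
  obtain ⟨r₀, hr₀⟩ := eventually_atTop.1 hC
  refine ⟨2 ^ (k + 1) * C, ?_⟩
  filter_upwards [eventually_ge_atTop r₀, eventually_gt_atTop 0] with r hr hpos
  have hnonneg (x : V) : 0 ≤ ((1 + ‖x‖ / r) ^ (k + 1))⁻¹ := by positivity
  have hle := tsum_mul_ofReal_inv_pow_le hr₀ hpos hr
  simp only [enorm_mul_ofReal_eq (hnonneg _)] at hle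
  have hbound := summable_norm_of_tsum_enorm_le (K := 2 ^ (k + 1) * C * r.toNNReal ^ k)
    (by exact_mod_cast hle)
  simp only [norm_mul, norm_norm, Real.norm_of_nonneg (hnonneg _)] at hbound
  refine ⟨hpos, hbound.1, hbound.2.trans_eq ?_⟩
  push_cast
  rw [Real.coe_toNNReal r hpos.le]

lemma isPolynomiallyBounded (h : HasBallGrowth m k) : IsPolynomiallyBounded m := by
  obtain ⟨K, hK⟩ := h.exists_tsum_le
  obtain ⟨r, ⟨-, hsum, -⟩, hr1⟩ := (hK.and (eventually_ge_atTop 1)).exists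
  refine ⟨k + 1, hsum.of_nonneg_of_le (fun x => by positivity) fun x => ?_⟩
  gcongr
  exact div_le_self (norm_nonneg x) hr1

end HasBallGrowth

end Growth

section CompactlySupportedApproximation

variable {E F : Type*} [NormedAddCommGroup E] [NormedSpace ℝ E] [HasContDiffBump E]
  [NormedAddCommGroup F] [NormedSpace ℝ F]

lemma contDiff_bump_smul (f : ContDiffBump (0 : E)) (a : ℝ) {n : ℕ∞} :
    ContDiff ℝ n fun y => f (a • y) :=
  f.contDiff.comp (contDiff_const_smul a)

variable [FiniteDimensional ℝ E]

lemma exists_norm_iteratedFDeriv_bump_smul_sub_one_le (f : ContDiffBump (0 : E)) (i : ℕ) :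
    ∃ M, 0 ≤ M ∧ ∀ a, 0 ≤ a → a ≤ 1 → ∀ y,
      ‖iteratedFDeriv ℝ i (fun z => f (a • z) - 1) y‖ ≤ a * (M * (1 + ‖y‖)) := by
  rcases eq_or_ne i 0 with rfl | hi
  · refine ⟨f.rIn⁻¹, inv_nonneg.2 f.rIn_pos.le, fun a ha _ y => ?_⟩
    rw [norm_iteratedFDeriv_zero]
    have hnonneg : 0 ≤ a * (f.rIn⁻¹ * (1 + ‖y‖)) :=
      mul_nonneg ha (mul_nonneg (inv_nonneg.2 f.rIn_pos.le) (by positivity))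
    by_cases hy : a • y ∈ closedBall 0 f.rIn
    · rwa [f.one_of_mem_closedBall hy, sub_self, norm_zero]
    · rw [mem_closedBall_zero_iff, not_le, norm_smul, Real.norm_of_nonneg ha] at hy
      calc ‖f (a • y) - 1‖ ≤ 1 := by
            rw [Real.norm_eq_abs, abs_le]
            constructor <;> linarith [f.nonneg (x := a • y), f.le_one (x := a • y)]
        _ ≤ f.rIn⁻¹ * (a * ‖y‖) := by
            rw [inv_mul_eq_div, one_le_div f.rIn_pos]
            exact hy.le
        _ = a * (f.rIn⁻¹ * ‖y‖) := mul_left_comm _ _ _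
        _ ≤ a * (f.rIn⁻¹ * (1 + ‖y‖)) := by
            have := inv_nonneg.2 f.rIn_pos.le
            gcongr
            linarith
  · obtain ⟨M, hM⟩ := (f.contDiff.continuous_iteratedFDeriv le_rfl).bounded_above_of_compact_support
      (f.hasCompactSupport.iteratedFDeriv (𝕜 := ℝ) i)
    refine ⟨M, (norm_nonneg _).trans (hM 0), fun a ha ha1 y => ?_⟩
    have hderiv : iteratedFDeriv ℝ i (fun z => f (a • z) - 1) y =
        a ^ i • iteratedFDeriv ℝ i f (a • y) := by
      rw [fun_iteratedFDeriv_sub_apply (contDiff_bump_smul f a).contDiffAt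
          contDiff_const.contDiffAt,
        iteratedFDeriv_const_of_ne hi, Pi.zero_apply, sub_zero,
        iteratedFDeriv_comp_const_smul a f.contDiff]
    rw [hderiv, norm_smul, norm_pow, Real.norm_of_nonneg ha]
    have hM0 := (norm_nonneg _).trans (hM (a • y))
    exact mul_le_mul (pow_le_of_le_one ha ha1 hi)
      ((hM _).trans (le_mul_of_one_le_right hM0 (by linarith [norm_nonneg y]))) (norm_nonneg _) ha

/-- The product of a Schwartz function with the dilate `y ↦ f (a • y)` of a bump function. -/
def bumpCutoff (f : ContDiffBump (0 : E)) (a : ℝ) : 𝓢(E, F) →L[ℝ] 𝓢(E, F) :=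
  smulLeftCLM F fun y => f (a • y)

variable (f : ContDiffBump (0 : E)) {a : ℝ}

lemma hasCompactSupport_bump_smul (ha : a ≠ 0) : HasCompactSupport fun y => f (a • y) :=
  f.hasCompactSupport.comp_homeomorph (Homeomorph.smulOfNeZero a ha)

lemma bumpCutoff_apply (ha : a ≠ 0) (φ : 𝓢(E, F)) (y : E) :
    bumpCutoff f a φ y = f (a • y) • φ y :=
  smulLeftCLM_apply_apply
    ((hasCompactSupport_bump_smul f ha).hasTemperateGrowth (contDiff_bump_smul f a)) φ y

lemma hasCompactSupport_bumpCutoff (ha : a ≠ 0) (φ : 𝓢(E, F)) :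
    HasCompactSupport (bumpCutoff f a φ) := by
  rw [funext (bumpCutoff_apply f ha φ)]
  exact (hasCompactSupport_bump_smul f ha).smul_right

lemma exists_seminorm_bumpCutoff_sub_le (φ : 𝓢(E, F)) (k n : ℕ) :
    ∃ C, ∀ a, 0 < a → a ≤ 1 → SchwartzMap.seminorm ℝ k n (bumpCutoff f a φ - φ) ≤ a * C := by
  choose M hM0 hM using exists_norm_iteratedFDeriv_bump_smul_sub_one_le f
  refine ⟨∑ i ∈ Finset.range (n + 1), n.choose i * M i *
    (SchwartzMap.seminorm ℝ k (n - i) φ + SchwartzMap.seminorm ℝ (k + 1) (n - i) φ),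
    fun a ha ha1 => ?_⟩
  have hterm (i : ℕ) : 0 ≤ n.choose i * M i *
      (SchwartzMap.seminorm ℝ k (n - i) φ + SchwartzMap.seminorm ℝ (k + 1) (n - i) φ) :=
    mul_nonneg (mul_nonneg (Nat.cast_nonneg _) (hM0 i))
      (add_nonneg (apply_nonneg _ _) (apply_nonneg _ _))
  refine seminorm_le_bound ℝ k n _
    (mul_nonneg ha.le (Finset.sum_nonneg fun i _ => hterm i)) fun y => ?_
  have hcoe : ⇑(bumpCutoff f a φ - φ) = fun y => (f (a • y) - 1) • φ y := by
    ext y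
    rw [sub_apply, bumpCutoff_apply f ha.ne', sub_smul, one_smul]
  have hleibniz := norm_iteratedFDeriv_smul_le ((contDiff_bump_smul f a).sub contDiff_const)
    (φ.smooth n) y (n := n) (N := n) le_rfl (f := fun z => f (a • z) - 1)
  rw [hcoe, Finset.mul_sum]
  refine (mul_le_mul_of_nonneg_left hleibniz (by positivity)).trans ?_
  rw [Finset.mul_sum]
  refine Finset.sum_le_sum fun i _ => ?_
  calc ‖y‖ ^ k * (n.choose i * ‖iteratedFDeriv ℝ i (fun z => f (a • z) - 1) y‖ *
        ‖iteratedFDeriv ℝ (n - i) φ y‖)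
      ≤ ‖y‖ ^ k * (n.choose i * (a * (M i * (1 + ‖y‖))) * ‖iteratedFDeriv ℝ (n - i) φ y‖) := by
        gcongr
        exact hM i a ha.le ha1 y
    _ = a * (n.choose i * M i * (‖y‖ ^ k * ‖iteratedFDeriv ℝ (n - i) φ y‖ +
          ‖y‖ ^ (k + 1) * ‖iteratedFDeriv ℝ (n - i) φ y‖)) := by ring
    _ ≤ _ := by
        have := hM0 i
        gcongr
        · exact le_seminorm ℝ k (n - i) φ y
        · exact le_seminorm ℝ (k + 1) (n - i) φ y

omit f in
theorem exists_hasCompactSupport_tendsto (φ : 𝓢(E, F)) :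
    ∃ Φ : ℕ → 𝓢(E, F), (∀ n, HasCompactSupport (Φ n)) ∧ Tendsto Φ atTop (𝓝 φ) := by
  let f : ContDiffBump (0 : E) := ⟨1, 2, one_pos, one_lt_two⟩
  have hpos (n : ℕ) : 0 < 1 / ((n : ℝ) + 1) := Nat.one_div_pos_of_nat
  refine ⟨fun n => bumpCutoff f (1 / ((n : ℝ) + 1)) φ,
    fun n => hasCompactSupport_bumpCutoff f (hpos n).ne' φ, ?_⟩
  refine ((schwartz_withSeminorms ℝ E F).tendsto_nhds _ φ).2 fun p ε hε => ?_
  obtain ⟨C, hC⟩ := exists_seminorm_bumpCutoff_sub_le f φ p.1 p.2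
  have hlim : Tendsto (fun n : ℕ => 1 / ((n : ℝ) + 1) * C) atTop (𝓝 0) := by
    simpa only [zero_mul] using tendsto_one_div_add_atTop_nhds_zero_nat.mul_const C
  filter_upwards [hlim.eventually_lt_const hε] with n hn
  exact (hC _ (hpos n) (div_le_one_of_le₀ (by linarith [n.cast_nonneg (α := ℝ)])
    (by positivity))).trans_lt hn

end CompactlySupportedApproximation

section PolynomiallyBounded

variable {V : Type*} [NormedAddCommGroup V] [NormedSpace ℝ V] {m : V → ℂ}

lemma norm_apply_le_mul_inv_pow (k : ℕ) (φ : 𝓢(V, ℂ)) (x : V) :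
    ‖φ x‖ ≤ 2 ^ k * (Finset.Iic (k, 0)).sup (schwartzSeminormFamily ℝ V ℂ) φ *
      ((1 + ‖x‖) ^ k)⁻¹ := by
  have h := one_add_le_sup_seminorm_apply (𝕜 := ℝ) (m := (k, 0)) le_rfl le_rfl φ x
  rw [norm_iteratedFDeriv_zero] at h
  rw [← div_eq_mul_inv, le_div_iff₀ (by positivity), mul_comm]
  exact h

namespace IsPolynomiallyBounded

lemma exists_summable_and_tsum_norm_mul_le (hm : IsPolynomiallyBounded m) :
    ∃ (k : ℕ) (C : ℝ), 0 ≤ C ∧ ∀ φ : 𝓢(V, ℂ), (Summable fun x => ‖m x * φ x‖) ∧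
      ∑' x, ‖m x * φ x‖ ≤ C * (Finset.Iic (k, 0)).sup (schwartzSeminormFamily ℝ V ℂ) φ := by
  obtain ⟨k, hk⟩ := hm
  refine ⟨k, (∑' x, ‖m x‖ * ((1 + ‖x‖) ^ k)⁻¹) * 2 ^ k,
    mul_nonneg (tsum_nonneg fun x => by positivity) (by positivity), fun φ => ?_⟩
  set A := 2 ^ k * (Finset.Iic (k, 0)).sup (schwartzSeminormFamily ℝ V ℂ) φ
  have hle (x : V) : ‖m x * φ x‖ ≤ ‖m x‖ * ((1 + ‖x‖) ^ k)⁻¹ * A := by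
    rw [norm_mul, mul_assoc, mul_comm _ A]
    gcongr
    exact norm_apply_le_mul_inv_pow k φ x
  have hsum := Summable.of_nonneg_of_le (fun x => norm_nonneg _) hle (hk.mul_right A)
  refine ⟨hsum, (hsum.tsum_le_tsum hle (hk.mul_right A)).trans_eq ?_⟩
  rw [tsum_mul_right, mul_assoc]

lemma summable_norm_mul (hm : IsPolynomiallyBounded m) (φ : 𝓢(V, ℂ)) :
    Summable fun x => ‖m x * φ x‖ := by
  obtain ⟨_, _, -, h⟩ := hm.exists_summable_and_tsum_norm_mul_le
  exact (h φ).1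

lemma continuous_tsum_mul (hm : IsPolynomiallyBounded m) :
    Continuous fun φ : 𝓢(V, ℂ) => ∑' x, m x * φ x := by
  obtain ⟨k, C, hC, h⟩ := hm.exists_summable_and_tsum_norm_mul_le
  have hsum (φ : 𝓢(V, ℂ)) : Summable fun x => m x * φ x := (h φ).1.of_norm
  exact (mkCLMtoNormedSpace (𝕜 := ℝ) (σ := RingHom.id ℝ) (fun φ : 𝓢(V, ℂ) => ∑' x, m x * φ x)
    (fun φ ψ => by simp only [add_apply, mul_add, (hsum φ).tsum_add (hsum ψ)])
    (fun a φ => by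
      simp only [smul_apply, mul_smul_comm, RingHom.id_apply]
      exact (hsum φ).tsum_const_smul a)
    ⟨Finset.Iic (k, 0), C, hC,
      fun φ => (norm_tsum_le_tsum_norm (h φ).1).trans (h φ).2⟩).continuous

end IsPolynomiallyBounded

end PolynomiallyBounded

section Fourier

open scoped FourierTransform ComplexConjugate ComplexOrder
open Module (finrank)

variable {V : Type*} [NormedAddCommGroup V] [InnerProductSpace ℝ V]

/-- The character `x ↦ e^{2πi⟪x, ω⟫}` of a real inner product space. -/
def innerChar (ω : V) : AddChar V Circle :=
  Real.fourierChar.compAddMonoidHom ((innerₗ V).flip ω).toAddMonoidHom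

lemma innerChar_apply (ω x : V) : innerChar ω x = 𝐞 ⟪x, ω⟫ := rfl

/-- The Schwartz function `x ↦ φ (r • x)`. -/
def dilate (r : ℝ) (hr : r ≠ 0) (φ : 𝓢(V, ℂ)) : 𝓢(V, ℂ) :=
  compCLMOfContinuousLinearEquiv ℂ (ContinuousLinearEquiv.smulLeft (Units.mk0 r hr)) φ

lemma hasCompactSupport_dilate {r : ℝ} (hr : r ≠ 0) {φ : 𝓢(V, ℂ)} (hφ : HasCompactSupport φ) :
    HasCompactSupport (dilate r hr φ) :=
  hφ.comp_homeomorph (Homeomorph.smulOfNeZero r hr)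

variable [FiniteDimensional ℝ V] [MeasurableSpace V] [BorelSpace V]

lemma fourierInv_comp_smul_sub (g : V → ℂ) {r : ℝ} (hr : 0 < r) (t ω : V) :
    𝓕⁻ (fun x => g (r • (x - t))) ω =
      innerChar ω t * (((r : ℂ) ^ finrank ℝ V)⁻¹ * 𝓕⁻ g (r⁻¹ • ω)) := by
  have hinner (x : V) : ⟪r • x, r⁻¹ • ω⟫ = ⟪x, ω⟫ := by
    rw [real_inner_smul_left, real_inner_smul_right, mul_inv_cancel_left₀ hr.ne']
  calc 𝓕⁻ (fun x => g (r • (x - t))) ω = ∫ x, 𝐞 ⟪x, ω⟫ • g (r • (x - t)) :=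
        Real.fourierInv_eq _ _
    _ = ∫ x, 𝐞 ⟪x + t, ω⟫ • g (r • x) := by
        rw [← integral_add_right_eq_self _ t]
        simp only [add_sub_cancel_right]
    _ = innerChar ω t * ∫ x, 𝐞 ⟪r • x, r⁻¹ • ω⟫ • g (r • x) := by
        rw [← integral_const_mul]
        simp only [inner_add_left, AddChar.map_add_eq_mul, hinner, innerChar_apply, Circle.smul_def,
          Circle.coe_mul, smul_eq_mul, mul_left_comm, mul_assoc]
    _ = _ := by
        rw [Measure.integral_comp_smul volume (fun x => 𝐞 ⟪x, r⁻¹ • ω⟫ • g x), Real.fourierInv_eq,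
          abs_of_pos (by positivity), real_smul, ofReal_inv, ofReal_pow]

lemma fourier_dilate {r : ℝ} (hr : 0 < r) (φ : 𝓢(V, ℂ)) (x : V) :
    𝓕 (dilate r hr.ne' φ) x = ((r : ℂ) ^ finrank ℝ V)⁻¹ * 𝓕 φ (r⁻¹ • x) := by
  have h := fourierInv_comp_smul_sub φ hr 0 (-x)
  simp only [sub_zero, AddChar.map_zero_eq_one, Circle.coe_one, one_mul, smul_neg,
    Real.fourierInv_eq_fourier_neg, neg_neg] at h
  exact h

lemma conj_fourier_ofReal (g : V → ℝ) (x : V) :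
    conj (𝓕 (fun y => (g y : ℂ)) x) = 𝓕⁻ (fun y => (g y : ℂ)) x := by
  rw [Real.fourier_eq, Real.fourierInv_eq, ← integral_conj]
  simp only [Circle.smul_def, smul_eq_mul, map_mul, conj_ofReal, AddChar.map_neg_eq_inv,
    Circle.coe_inv_eq_conj, conj_conj]

lemma exists_hasCompactSupport_fourier_nonneg :
    ∃ φ : 𝓢(V, ℂ), HasCompactSupport φ ∧ (∀ x, 0 ≤ 𝓕 φ x) ∧ 𝓕 φ 0 ≠ 0 := by
  let f : ContDiffBump (0 : V) := ⟨1, 2, one_pos, one_lt_two⟩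
  let φ := SchwartzMap.convolution (ContinuousLinearMap.mul ℂ ℂ) (bumpSchwartz f) (bumpSchwartz f)
  have hconj (x : V) : conj (𝓕 (bumpSchwartz f) x) = 𝓕 (bumpSchwartz f) x := by
    rw [fourier_coe]
    refine (conj_fourier_ofReal f x).trans ?_
    simp only [Real.fourierInv_eq_fourier_comp_neg, f.neg]
    rfl
  have hφ (x : V) : 𝓕 φ x = 𝓕 (bumpSchwartz f) x * conj (𝓕 (bumpSchwartz f) x) := by
    rw [fourier_convolution, hconj]
    rfl
  have h0 : 𝓕 (bumpSchwartz f) 0 = ((∫ y, f y : ℝ) : ℂ) := by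
    rw [fourier_coe, Real.fourier_eq]
    simp only [inner_zero_right, neg_zero, AddChar.map_zero_eq_one, one_smul]
    exact integral_ofReal
  refine ⟨φ, ?_, fun x => ?_, ?_⟩
  · have hcoe : ⇑φ = MeasureTheory.convolution (bumpSchwartz f) (bumpSchwartz f)
        (ContinuousLinearMap.mul ℂ ℂ) volume :=
      funext fun x => SchwartzMap.convolution_apply _ _ _ x
    rw [hcoe]
    exact (hasCompactSupport_bumpSchwartz f).convolution _ (hasCompactSupport_bumpSchwartz f)
  · rw [hφ]
    exact mul_star_self_nonneg _
  · rw [hφ, hconj, h0, ← ofReal_mul, ofReal_ne_zero]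
    exact mul_self_ne_zero.2 f.integral_pos.ne'

end Fourier

section Rescaling

variable {V : Type*} [NormedAddCommGroup V]

lemma inv_pow_norm_sub_le (k : ℕ) (x p : V) :
    ((1 + ‖x - p‖) ^ k)⁻¹ ≤ (1 + ‖p‖) ^ k * ((1 + ‖x‖) ^ k)⁻¹ := by
  rw [← div_eq_mul_inv, inv_eq_one_div, div_le_div_iff₀ (by positivity) (by positivity), one_mul,
    ← mul_pow]
  gcongr
  nlinarith [norm_le_norm_sub_add x p, mul_nonneg (norm_nonneg p) (norm_nonneg (x - p))]

variable [NormedSpace ℝ V] {m : V → ℂ}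

lemma IsPolynomiallyBounded.tendsto_tsum_mul_smul_sub (hm : IsPolynomiallyBounded m)
    (ψ : 𝓢(V, ℂ)) (p : V) :
    Tendsto (fun r : ℝ => ∑' x, m x * ψ (r • (x - p))) atTop (𝓝 (m p * ψ 0)) := by
  classical
  obtain ⟨k, hk⟩ := hm
  set A := 2 ^ k * (Finset.Iic (k, 0)).sup (schwartzSeminormFamily ℝ V ℂ) ψ
  have hlim (x : V) : Tendsto (fun r : ℝ => m x * ψ (r • (x - p))) atTop
      (𝓝 (if x = p then m p * ψ 0 else 0)) := by
    split_ifs with hx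
    · simp only [hx, sub_self, smul_zero, tendsto_const_nhds]
    · rw [← mul_zero (m x)]
      have hnorm : Tendsto (fun r : ℝ => (1 + ‖r • (x - p)‖) ^ 1) atTop atTop := by
        simp only [pow_one, norm_smul]
        exact tendsto_atTop_add_const_left _ _
          (tendsto_norm_atTop_atTop.atTop_mul_const (norm_pos_iff.2 (sub_ne_zero.2 hx)))
      refine (squeeze_zero_norm (fun r => norm_apply_le_mul_inv_pow 1 ψ _) ?_).const_mul _
      simpa only [mul_zero, Pi.inv_apply] using hnorm.inv_tendsto_atTop.const_mul _
  rw [← tsum_ite_eq p fun _ => m p * ψ 0]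
  refine tendsto_tsum_of_dominated_convergence (hk.mul_left (A * (1 + ‖p‖) ^ k)) hlim ?_
  filter_upwards [eventually_ge_atTop 1] with r hr x
  have hexpand : ‖x - p‖ ≤ ‖r • (x - p)‖ := by
    rw [norm_smul, Real.norm_of_nonneg (by positivity)]
    exact le_mul_of_one_le_left (norm_nonneg _) hr
  calc ‖m x * ψ (r • (x - p))‖ ≤ ‖m x‖ * (A * ((1 + ‖r • (x - p)‖) ^ k)⁻¹) := by
        rw [norm_mul]
        gcongr
        exact norm_apply_le_mul_inv_pow k ψ _
    _ ≤ ‖m x‖ * (A * ((1 + ‖p‖) ^ k * ((1 + ‖x‖) ^ k)⁻¹)) := by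
        gcongr
        exact (inv_anti₀ (by positivity) (by gcongr)).trans (inv_pow_norm_sub_le k x p)
    _ = A * (1 + ‖p‖) ^ k * (‖m x‖ * ((1 + ‖x‖) ^ k)⁻¹) := by ring

lemma HasBallGrowth.exists_tsum_norm_mul_le {k : ℕ} (hm : HasBallGrowth m k) (φ : 𝓢(V, ℂ)) :
    ∃ C : ℝ, ∀ᶠ r : ℝ in atTop, 0 < r ∧
      (Summable fun x => ‖m x * (((r : ℂ) ^ k)⁻¹ * φ (r⁻¹ • x))‖) ∧
      ∑' x, ‖m x * (((r : ℂ) ^ k)⁻¹ * φ (r⁻¹ • x))‖ ≤ C := by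
  obtain ⟨K, hK⟩ := hm.exists_tsum_le
  set A := 2 ^ (k + 1) * (Finset.Iic (k + 1, 0)).sup (schwartzSeminormFamily ℝ V ℂ) φ
  refine ⟨A * K, ?_⟩
  filter_upwards [hK] with r ⟨hr, hsum, hle⟩
  have hterm (x : V) : ‖m x * (((r : ℂ) ^ k)⁻¹ * φ (r⁻¹ • x))‖ ≤
      A * (r ^ k)⁻¹ * (‖m x‖ * ((1 + ‖x‖ / r) ^ (k + 1))⁻¹) := by
    have hφ := norm_apply_le_mul_inv_pow (k + 1) φ (r⁻¹ • x)
    rw [norm_smul, norm_inv, Real.norm_of_nonneg hr.le, inv_mul_eq_div] at hφ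
    calc ‖m x * (((r : ℂ) ^ k)⁻¹ * φ (r⁻¹ • x))‖
        = ‖m x‖ * ((r ^ k)⁻¹ * ‖φ (r⁻¹ • x)‖) := by
          rw [norm_mul, norm_mul, norm_inv, norm_pow, norm_real, Real.norm_of_nonneg hr.le]
      _ ≤ ‖m x‖ * ((r ^ k)⁻¹ * (A * ((1 + ‖x‖ / r) ^ (k + 1))⁻¹)) := by gcongr
      _ = _ := by ring
  have hmaj := hsum.mul_left (A * (r ^ k)⁻¹)
  have hsum' := Summable.of_nonneg_of_le (fun x => norm_nonneg _) hterm hmaj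
  refine ⟨hr, hsum', (hsum'.tsum_le_tsum hterm hmaj).trans ?_⟩
  calc ∑' x, A * (r ^ k)⁻¹ * (‖m x‖ * ((1 + ‖x‖ / r) ^ (k + 1))⁻¹)
      ≤ A * (r ^ k)⁻¹ * (K * r ^ k) := by
        rw [tsum_mul_left]
        gcongr
    _ = A * K := by field_simp

end Rescaling

section Poisson

open scoped FourierTransform ComplexOrder

lemma norm_tsum_of_nonneg {ι : Type*} {f : ι → ℂ} (hf : ∀ i, 0 ≤ f i) :
    ‖∑' i, f i‖ = ∑' i, ‖f i‖ := by
  have heq : ∑' i, f i = ((∑' i, ‖f i‖ : ℝ) : ℂ) := by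
    rw [ofReal_tsum]
    exact tsum_congr fun i => (norm_of_nonneg' (hf i)).symm
  rw [heq, norm_real, Real.norm_of_nonneg (tsum_nonneg fun i => norm_nonneg _)]

lemma PPM.Nonneg.zero_le {V : Type*} {μ : PPM V} (hpos : μ.Nonneg) (x : V) : 0 ≤ μ.mass x := by
  rw [hpos x]
  exact zero_le_real.2 (norm_nonneg _)

lemma PPM.hasBallGrowth {ν : PPM (Ed d)} {k : ℕ}
    (hν : ∃ C : ℝ, ∀ᶠ r : ℝ in atTop, ν.var (ball 0 r) ≤ ENNReal.ofReal (C * r ^ k)) :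
    HasBallGrowth ν.mass k := by
  obtain ⟨C, hC⟩ := hν
  refine ⟨C.toNNReal, ?_⟩
  filter_upwards [hC, eventually_ge_atTop 0] with r hr h0
  rw [ENNReal.ofReal_mul' (by positivity), ENNReal.ofReal_pow h0] at hr
  exact (tsum_subtype (ball 0 r) fun y => ‖ν.mass y‖ₑ).symm.trans_le hr

lemma tsum_indicator_enorm_le {X : Type*} {m g : X → ℂ} {s : Set X} {ε : ℝ} (hε : 0 < ε)
    (hg : ∀ x ∈ s, ε ≤ ‖g x‖) (hsum : Summable fun x => ‖m x * g x‖) :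
    ∑' x, s.indicator (fun y => ‖m y‖ₑ) x ≤ ENNReal.ofReal (ε⁻¹ * ∑' x, ‖m x * g x‖) := by
  rw [← tsum_mul_left, ENNReal.ofReal_tsum_of_nonneg (fun x => by positivity) (hsum.mul_left _)]
  refine ENNReal.tsum_le_tsum fun x => Set.indicator_apply_le' (fun hx => ?_) fun _ => zero_le
  rw [← ofReal_norm, norm_mul, mul_left_comm]
  refine ENNReal.ofReal_le_ofReal (le_mul_of_one_le_right (norm_nonneg _) ?_)
  rw [inv_mul_eq_div, one_le_div hε]
  exact hg x hx

namespace IsFT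

variable {μ ν : PPM (Ed d)}

lemma tsum_norm_mul_dilate_le (hF : IsFT μ ν) (hpos : μ.Nonneg) {φ : 𝓢(Ed d, ℂ)}
    (hφ : HasCompactSupport φ) (hφ0 : ∀ x, 0 ≤ 𝓕 φ x) {r : ℝ} (hr : 0 < r) :
    ∑' x, ‖μ.mass x * 𝓕 (dilate r hr.ne' φ) x‖ ≤ ‖∑' ω, ν.mass ω * φ (r • ω)‖ := by
  have hnonneg (x : Ed d) : 0 ≤ μ.mass x * 𝓕 (dilate r hr.ne' φ) x := by
    rw [fourier_dilate hr, ← ofReal_pow, ← ofReal_inv]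
    exact mul_nonneg (hpos.zero_le x) (mul_nonneg (zero_le_real.2 (by positivity)) (hφ0 _))
  rw [← norm_tsum_of_nonneg hnonneg]
  exact (congrArg norm (hF _ (hasCompactSupport_dilate hr.ne' hφ))).le

lemma hasBallGrowth (hF : IsFT μ ν) (hpos : μ.Nonneg) (hμ : μ.temperate)
    (hν : IsPolynomiallyBounded ν.mass) : HasBallGrowth μ.mass d := by
  obtain ⟨φ, hφ, hφ0, hne⟩ := exists_hasCompactSupport_fourier_nonneg (V := Ed d)
  obtain ⟨ε, hε, hε0⟩ := exists_between (norm_pos_iff.2 hne)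
  obtain ⟨δ, hδ, hδφ⟩ := Metric.eventually_nhds_iff_ball.1
    ((𝓕 φ).continuous.norm.continuousAt.eventually_const_lt hε0)
  have hlim : ∀ᶠ r : ℝ in atTop, ‖∑' ω, ν.mass ω * φ (r • ω)‖ < ‖ν.mass 0 * φ 0‖ + 1 := by
    have h := (hν.tendsto_tsum_mul_smul_sub φ 0).norm
    simp only [sub_zero] at h
    exact h.eventually_lt_const (lt_add_one _)
  refine ⟨(ε⁻¹ * (δ ^ d)⁻¹ * (‖ν.mass 0 * φ 0‖ + 1)).toNNReal, ?_⟩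
  filter_upwards [(tendsto_id.atTop_div_const hδ).eventually hlim, eventually_gt_atTop 0]
    with R hR hR0
  have hr : 0 < R / δ := div_pos hR0 hδ
  have hlow (x : Ed d) (hx : x ∈ ball 0 R) :
      ((R / δ) ^ d)⁻¹ * ε ≤ ‖𝓕 (dilate (R / δ) hr.ne' φ) x‖ := by
    rw [fourier_dilate hr, finrank_euclideanSpace_fin, norm_mul, norm_inv, norm_pow, norm_real,
      Real.norm_of_nonneg hr.le]
    gcongr
    refine (hδφ _ ?_).le
    rw [mem_ball_zero_iff] at hx ⊢
    rwa [norm_smul, norm_inv, Real.norm_of_nonneg hr.le, inv_div, div_mul_eq_mul_div,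
      div_lt_iff₀ hR0, mul_lt_mul_iff_right₀ hδ]
  calc ∑' x, (ball 0 R).indicator (fun y => ‖μ.mass y‖ₑ) x
      ≤ ENNReal.ofReal ((((R / δ) ^ d)⁻¹ * ε)⁻¹ *
          ∑' x, ‖μ.mass x * 𝓕 (dilate (R / δ) hr.ne' φ) x‖) :=
        tsum_indicator_enorm_le (by positivity) hlow (hμ _).norm
    _ ≤ ENNReal.ofReal ((((R / δ) ^ d)⁻¹ * ε)⁻¹ * (‖ν.mass 0 * φ 0‖ + 1)) := by
        gcongr
        exact (hF.tsum_norm_mul_dilate_le hpos hφ hφ0 hr).trans hR.le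
    _ = ENNReal.ofReal (ε⁻¹ * (δ ^ d)⁻¹ * (‖ν.mass 0 * φ 0‖ + 1) * R ^ d) := by
        rw [div_pow]
        field_simp
    _ = _ := by
        rw [ENNReal.ofReal_mul (by positivity), ENNReal.ofReal_pow hR0.le]
        rfl

lemma tsum_mul_fourier (hF : IsFT μ ν) (hμ : IsPolynomiallyBounded μ.mass)
    (hν : IsPolynomiallyBounded ν.mass) (φ : 𝓢(Ed d, ℂ)) :
    ∑' x, μ.mass x * 𝓕 φ x = ∑' ω, ν.mass ω * φ ω := by
  obtain ⟨Φ, hΦ, hlim⟩ := exists_hasCompactSupport_tendsto φ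
  have hleft := (hμ.continuous_tsum_mul.comp
    (FourierTransform.fourierCLE ℂ 𝓢(Ed d, ℂ)).continuous).tendsto φ |>.comp hlim
  refine tendsto_nhds_unique hleft (((hν.continuous_tsum_mul.tendsto φ).comp hlim).congr ?_)
  exact fun n => (hF (Φ n) (hΦ n)).symm

lemma tsum_mul_comp_smul_sub (hF : IsFT μ ν) (hμ : IsPolynomiallyBounded μ.mass)
    (hν : IsPolynomiallyBounded ν.mass) (ψ : 𝓢(Ed d, ℂ)) {r : ℝ} (hr : 0 < r) (t : Ed d) :
    ∑' x, μ.mass x * ψ (r • (x - t)) =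
      ∑' ω, ν.mass ω * (((r : ℂ) ^ d)⁻¹ * 𝓕⁻ ψ (r⁻¹ • ω)) * innerChar ω t := by
  have h := hF.tsum_mul_fourier hμ hν (𝓕⁻ (compSubConstCLM ℂ t (dilate r hr.ne' ψ)))
  rw [FourierTransform.fourier_fourierInv_eq] at h
  refine h.trans (tsum_congr fun ω => ?_)
  rw [mul_assoc, mul_comm _ (innerChar ω t : ℂ), fourierInv_coe, fourierInv_coe]
  have := fourierInv_comp_smul_sub ψ hr t ω
  rw [finrank_euclideanSpace_fin] at this
  rw [← this]
  rfl

lemma tsum_mul_comp_sub (hF : IsFT μ ν) (hμ : IsPolynomiallyBounded μ.mass)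
    (hν : IsPolynomiallyBounded ν.mass) (ψ : 𝓢(Ed d, ℂ)) (t : Ed d) :
    ∑' x, μ.mass x * ψ (x - t) = ∑' ω, ν.mass ω * 𝓕⁻ ψ ω * innerChar ω t := by
  simpa only [one_smul, inv_one, ofReal_one, one_pow, one_mul] using
    hF.tsum_mul_comp_smul_sub hμ hν ψ one_pos t

lemma isFourierStieltjes (hF : IsFT μ ν) (hμ : IsPolynomiallyBounded μ.mass)
    (hν : HasBallGrowth ν.mass d) : IsFourierStieltjes μ.mass := by
  let f : ContDiffBump (0 : Ed d) := ⟨1, 2, one_pos, one_lt_two⟩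
  obtain ⟨K, hK⟩ := hν.exists_tsum_norm_mul_le (𝓕⁻ (bumpSchwartz f))
  obtain ⟨r₀, hr₀⟩ := eventually_atTop.1 hK
  have hr (n : ℕ) := hr₀ (r₀ + n) (le_add_of_nonneg_right n.cast_nonneg)
  refine .of_tendsto_tsum (χ := innerChar) (fun n => (hr n).2.1) (fun n => (hr n).2.2) fun p => ?_
  simp only [← hF.tsum_mul_comp_smul_sub hμ hν.isPolynomiallyBounded _ (hr _).1]
  have hlim := (hμ.tendsto_tsum_mul_smul_sub (bumpSchwartz f) p).comp
    (tendsto_atTop_add_const_left _ r₀ tendsto_natCast_atTop_atTop)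
  rwa [bumpSchwartz_self, mul_one] at hlim

end IsFT

end Poisson

section BohrNull

open scoped FourierTransform

variable {V : Type*} [NormedAddCommGroup V] [InnerProductSpace ℝ V] {S : Set V} {τ : ℕ → V}

/-- The sequence `τ` tends to `0` in the topology induced by the characters with frequency
in `S`. -/
def IsBohrNull (S : Set V) (τ : ℕ → V) : Prop :=
  ∀ ω ∈ S, Tendsto (fun k => innerChar ω (τ k)) atTop (𝓝 1)

lemma IsBohrNull.neg (hτ : IsBohrNull S τ) : IsBohrNull S (-τ) := fun ω hω => by
  simpa only [Pi.neg_apply, AddChar.map_neg_eq_inv, inv_one] using (hτ ω hω).inv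

lemma exists_isBohrNull_sub (hS : S.Countable) (s : ℕ → V) {Q : ℕ → ℕ → ℕ → Prop}
    (hQ : ∀ k j, ∀ᶠ l in atTop, Q k j l) :
    ∃ j l : ℕ → ℕ, IsBohrNull S (fun k => s (l k) - s (j k)) ∧ ∀ k, Q k (j k) (l k) := by
  have := hS.to_subtype
  obtain ⟨a, φ, hφ, ha⟩ := CompactSpace.tendsto_subseq fun n (ω : S) => innerChar (ω : V) (s n)
  have hex (k : ℕ) : ∃ n, k ≤ n ∧ Q k (φ k) (φ n) :=
    ((eventually_ge_atTop k).and (hφ.tendsto_atTop.eventually (hQ k (φ k)))).exists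
  choose n hn hnQ using hex
  refine ⟨φ, φ ∘ n, fun ω hω => ?_, hnQ⟩
  have hω' := tendsto_pi_nhds.1 ha ⟨ω, hω⟩
  simp only [AddChar.map_sub_eq_div]
  rw [← div_self' (a ⟨ω, hω⟩)]
  exact (hω'.comp (tendsto_atTop_mono hn tendsto_id)).div' hω'

lemma exists_isBohrNull_ball_subset (hS : S.Countable) (s : ℕ → V) {R : ℕ → ℝ}
    (hR : Tendsto R atTop atTop) :
    ∃ τ, IsBohrNull S τ ∧ ∀ p r, ∀ᶠ k in atTop, ball (p + τ k) r ⊆ ⋃ n, ball (s n) (R n) := by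
  obtain ⟨j, l, hτ, hjl⟩ := exists_isBohrNull_sub hS s (Q := fun k j l => k + ‖s j‖ ≤ R l)
    fun k j => hR.eventually_ge_atTop _
  refine ⟨_, hτ, fun p r => ?_⟩
  filter_upwards [tendsto_natCast_atTop_atTop.eventually_ge_atTop (r + ‖p‖)] with k hk
  refine (ball_subset_ball' ?_).trans (Set.subset_iUnion (fun n => ball (s n) (R n)) (l k))
  rw [dist_eq_norm, ← add_sub_assoc, add_sub_right_comm, add_sub_cancel_right]
  linarith [norm_sub_le p (s (j k)), hjl k]

/-- The moment curve `n ↦ (n, n ^ 2, …, n ^ d)`. -/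
def momentCurve (d n : ℕ) : Ed d := WithLp.toLp 2 fun i => (n : ℝ) ^ (i + 1 : ℕ)

lemma natCast_isBigO_inner_momentCurve {v : Ed d} (hv : v ≠ 0) :
    (fun n : ℕ => (n : ℝ)) =O[atTop] fun n => ⟪v, momentCurve d n⟫ := by
  let q := Polynomial.ofFn d v.ofLp
  have hq : q ≠ 0 := fun h => hv (WithLp.ofLp_injective 2
    (Polynomial.injective_ofFn d (h.trans (Polynomial.ofFn_zero d).symm)))
  have hinner (n : ℕ) : ⟪v, momentCurve d n⟫ = (Polynomial.X * q).eval (n : ℝ) := by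
    have hsum : q = ∑ i : Fin d, Polynomial.monomial (i : ℕ) (v i) :=
      Polynomial.ofFn_eq_sum_monomial v.ofLp
    simp only [hsum, Polynomial.eval_mul, Polynomial.eval_X, Polynomial.eval_finsetSum,
      Polynomial.eval_monomial, Finset.mul_sum, PiLp.inner_apply, momentCurve, pow_succ,
      RCLike.inner_apply, conj_trivial]
    exact Finset.sum_congr rfl fun i _ => by ring
  have hdeg : (Polynomial.X : Polynomial ℝ).degree ≤ (Polynomial.X * q).degree :=
    Polynomial.degree_le_mul_left _ hq
  simpa only [hinner, Polynomial.eval_X, Function.comp_def] using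
    (Polynomial.isBigO_atTop_of_degree_le _ _ hdeg).comp_tendsto tendsto_natCast_atTop_atTop

lemma exists_isBohrNull_tendsto_abs_inner {S : Set (Ed d)} (hS : S.Countable) :
    ∃ τ : ℕ → Ed d, IsBohrNull S τ ∧
      ∀ v ≠ 0, Tendsto (fun k => |⟪v, τ k⟫|) atTop atTop := by
  obtain ⟨j, l, hnull, hjl⟩ := exists_isBohrNull_sub hS (momentCurve d)
    (Q := fun k j l => ((k : ℝ) + 1) * (‖momentCurve d j‖ + 1) ≤ l)
    fun k j => tendsto_natCast_atTop_atTop.eventually_ge_atTop _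
  refine ⟨_, hnull, fun v hv => ?_⟩
  obtain ⟨C, hC, hlow⟩ := (natCast_isBigO_inner_momentCurve hv).exists_pos
  have hl : Tendsto l atTop atTop := by
    refine tendsto_atTop_mono (fun k => ?_) tendsto_id
    have hk := hjl k
    have : (k : ℝ) ≤ l k := by
      nlinarith [norm_nonneg (momentCurve d (j k)), (Nat.cast_nonneg k : (0 : ℝ) ≤ k)]
    exact_mod_cast this
  have hlin : Tendsto (fun k : ℕ => ((k : ℝ) + 1) / C) atTop atTop :=
    (tendsto_atTop_add_const_right _ 1 tendsto_natCast_atTop_atTop).atTop_div_const hC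
  refine tendsto_atTop_mono' _ ?_ hlin
  filter_upwards [hl.eventually hlow.bound, hlin.eventually_ge_atTop ‖v‖] with k hk hkv
  have hbig : ((k : ℝ) + 1) / C * (‖momentCurve d (j k)‖ + 1) ≤ |⟪v, momentCurve d (l k)⟫| := by
    rw [div_mul_eq_mul_div, div_le_iff₀' hC]
    exact (hjl k).trans (by simpa only [Real.norm_eq_abs, Nat.abs_cast] using hk)
  have hsmall : |⟪v, momentCurve d (j k)⟫| ≤ ((k : ℝ) + 1) / C * ‖momentCurve d (j k)‖ :=
    (abs_real_inner_le_norm _ _).trans (by gcongr)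
  rw [inner_sub_right]
  linarith [abs_sub_abs_le_abs_sub ⟪v, momentCurve d (l k)⟫ ⟪v, momentCurve d (j k)⟫]

lemma IsFT.isRecurrent {μ ν : PPM (Ed d)} (hF : IsFT μ ν) (hμ : IsPolynomiallyBounded μ.mass)
    (hν : IsPolynomiallyBounded ν.mass) {τ : ℕ → Ed d}
    (hτ : IsBohrNull (Function.support ν.mass) τ) : IsRecurrent μ.mass τ := fun φ _ => by
  have h0 := hF.tsum_mul_comp_sub hμ hν φ 0
  simp only [sub_zero] at h0
  rw [h0]
  simp only [hF.tsum_mul_comp_sub hμ hν]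
  refine tendsto_tsum_of_dominated_convergence (hν.summable_norm_mul (𝓕⁻ φ)) (fun ω => ?_)
    (.of_forall fun k ω => ?_)
  · by_cases hω : ν.mass ω = 0
    · simp only [hω, zero_mul, tendsto_const_nhds]
    · rw [AddChar.map_zero_eq_one]
      exact ((continuous_subtype_val.tendsto _).comp (hτ ω hω)).const_mul _
  · rw [norm_mul, Circle.norm_coe, mul_one]

end BohrNull

section Globalization

variable {V : Type*} [NormedAddCommGroup V] [NormedSpace ℝ V] [FiniteDimensional ℝ V]
  [HasContDiffBump V] {m : V → ℂ} {τ : ℕ → V} {E : Set V} {β : ℝ}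

open scoped ComplexOrder

namespace IsRecurrent

lemma eventually_exists_dist_lt_of_nonneg (hτ : IsRecurrent m τ) (hm : ∀ x, 0 ≤ m x)
    (hpoly : IsPolynomiallyBounded m) {x : V} (hx : m x ≠ 0) {r : ℝ} (hr : 0 < r) :
    ∀ᶠ k in atTop, ∃ y ∈ Function.support m, dist y (x + τ k) < r := by
  let f : ContDiffBump x := ⟨r / 2, r, half_pos hr, half_lt_self hr⟩
  have hne : ∑' y, m y * bumpSchwartz f y ≠ 0 := by
    have hf (y : V) : 0 ≤ m y * bumpSchwartz f y :=
      mul_nonneg (hm y) (zero_le_real.2 f.nonneg)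
    rw [← norm_pos_iff, norm_tsum_of_nonneg hf]
    refine (hpoly.summable_norm_mul _).tsum_pos (fun y => norm_nonneg _) x (norm_pos_iff.2 ?_)
    rwa [bumpSchwartz_self, mul_one]
  filter_upwards [(hτ _ (hasCompactSupport_bumpSchwartz f)).eventually_ne hne] with k hk
  contrapose! hk
  exact tsum_mul_bumpSchwartz_eq_zero f hk

lemma pairwise_le_dist (hτ : IsRecurrent m τ) (hm : ∀ x, 0 ≤ m x)
    (hpoly : IsPolynomiallyBounded m) (hE : ∀ p r, ∀ᶠ k in atTop, ball (p + τ k) r ⊆ E)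
    (hsep : (E ∩ Function.support m).Pairwise fun x y => β ≤ dist x y) :
    (Function.support m).Pairwise fun x y => β ≤ dist x y := by
  intro x hx y hy hxy
  refine le_of_forall_pos_le_add fun ε hε => ?_
  let r := min (ε / 2) (dist x y / 2)
  have hr : 0 < r := lt_min (half_pos hε) (half_pos (dist_pos.2 hxy))
  obtain ⟨k, ⟨x', hx', hxx'⟩, ⟨y', hy', hyy'⟩, hxE, hyE⟩ :=
    ((hτ.eventually_exists_dist_lt_of_nonneg hm hpoly hx hr).and
      ((hτ.eventually_exists_dist_lt_of_nonneg hm hpoly hy hr).and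
        ((hE x r).and (hE y r)))).exists
  have hdist : dist (x + τ k) (y + τ k) = dist x y := dist_add_right x y (τ k)
  have hne : x' ≠ y' := by
    rintro rfl
    linarith [dist_triangle_left (x + τ k) (y + τ k) x', min_le_right (ε / 2) (dist x y / 2)]
  linarith [hsep ⟨hxE hxx', hx'⟩ ⟨hyE hyy', hy'⟩ hne, dist_triangle4 x' (x + τ k) (y + τ k) y',
    dist_comm y' (y + τ k), min_le_left (ε / 2) (dist x y / 2)]

lemma le_re (hτ : IsRecurrent m τ) (hβ : 0 < β)
    (hsep : (Function.support m).Pairwise fun x y => β ≤ dist x y)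
    (hE : ∀ p r, ∀ᶠ k in atTop, ball (p + τ k) r ⊆ E) {c : ℝ}
    (hmass : ∀ x ∈ E ∩ Function.support m, c ≤ (m x).re) {x : V} (hx : m x ≠ 0) :
    c ≤ (m x).re := by
  obtain ⟨γ, hγx, hγ⟩ := hτ.exists_tendsto_sub hβ hsep hx
  let u : Ultrafilter ℕ := .of atTop
  have hu : (u : Filter ℕ) ≤ atTop := Ultrafilter.of_le atTop
  have hlim : Tendsto (fun k => m (x + γ k)) u (𝓝 (m x)) :=
    hτ.isReturnSeq hβ hsep hu (hγ.mono_left hu) x (.of_forall hγx)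
  refine ge_of_tendsto ((continuous_re.tendsto _).comp hlim) (hu ?_)
  filter_upwards [hE x 1, hγ.eventually (ball_mem_nhds 0 one_pos)] with k hk hγk
  refine hmass _ ⟨hk ?_, hγx k⟩
  rwa [mem_ball, dist_add_left, dist_eq_norm, ← Pi.sub_apply, ← mem_ball_zero_iff]

end IsRecurrent

end Globalization

section DirichletSeries

open scoped FourierTransform

lemma fourierChar_intCast (n : ℤ) : 𝐞 (n : ℝ) = 1 := by
  ext
  rw [Real.fourierChar_apply, Circle.coe_one]
  convert exp_int_mul_two_pi_mul_I n using 2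
  push_cast
  ring

lemma innerChar_fract_basisFun (v : Ed d) (n : Fin d → ℤ) :
    innerChar (ZSpan.fract (EuclideanSpace.basisFun (Fin d) ℝ).toBasis v)
      (WithLp.toLp 2 fun i => (n i : ℝ)) = innerChar v (WithLp.toLp 2 fun i => (n i : ℝ)) := by
  have hinner (w : Ed d) : ⟪WithLp.toLp 2 fun i => (n i : ℝ), w⟫ =
      ∑ i, (EuclideanSpace.basisFun (Fin d) ℝ).toBasis.repr w i * n i := by
    simp [PiLp.inner_apply]
  have hfract : ⟪WithLp.toLp 2 fun i => (n i : ℝ),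
      ZSpan.fract (EuclideanSpace.basisFun (Fin d) ℝ).toBasis v⟫ =
        ⟪WithLp.toLp 2 fun i => (n i : ℝ), v⟫ - ((∑ i, ⌊v i⌋ * n i : ℤ) : ℝ) := by
    simp only [hinner, ZSpan.repr_fract_apply, Int.fract, sub_mul, Finset.sum_sub_distrib]
    simp
  rw [innerChar_apply, innerChar_apply, hfract, AddChar.map_sub_eq_div, fourierChar_intCast,
    div_one]

lemma exists_isBounded_range_innerChar_eq (T : Ed d ≃ₗ[ℝ] Ed d) (l : Ed d) :
    ∃ ρ : Ed d → Ed d, IsBounded (Set.range ρ) ∧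
      ∀ ω, ∀ x ∈ latt T l, innerChar (ρ ω) (x - l) = innerChar ω (x - l) := by
  let b := (EuclideanSpace.basisFun (Fin d) ℝ).toBasis
  let A := LinearMap.adjoint (T : Ed d →ₗ[ℝ] Ed d)
  let A' := LinearMap.adjoint (T.symm : Ed d →ₗ[ℝ] Ed d)
  refine ⟨fun ω => A' (ZSpan.fract b (A ω)), ?_, ?_⟩
  · refine ((LinearMap.toContinuousLinearMap A').lipschitz.isBounded_image
      (ZSpan.fundamentalDomain_isBounded b)).subset ?_
    rintro _ ⟨ω, rfl⟩
    exact ⟨_, ZSpan.fract_mem_fundamentalDomain b _, rfl⟩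
  · rintro ω _ ⟨n, rfl⟩
    rw [add_sub_cancel_right, WithLp.equiv_symm_apply, innerChar_apply,
      LinearMap.adjoint_inner_right, LinearEquiv.coe_coe, LinearEquiv.symm_apply_apply,
      ← innerChar_apply, innerChar_fract_basisFun, innerChar_apply, LinearMap.adjoint_inner_right,
      LinearEquiv.coe_coe, ← innerChar_apply]

lemma exists_dser_eq {ι : Type*} [Countable ι] {a : ι → ℂ} {w : ι → Ed d}
    (ha : Summable fun s => ‖a s‖) (hw : IsBounded (Set.range w)) :
    ∃ q ω, (Summable fun i => ‖q i‖) ∧ IsBounded (Set.range ω) ∧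
      ∀ x, dser q ω x = ∑' s, a s * innerChar (w s) x := by
  obtain ⟨e, he⟩ := exists_injective_nat ι
  have hq (i : ℕ) (hi : i ∉ Set.range e) : Function.extend e a 0 i = 0 :=
    Function.extend_apply' _ _ _ hi
  refine ⟨Function.extend e a 0, Function.extend e w 0, ?_, ?_, fun x => ?_⟩
  · rw [← he.summable_iff fun i hi => by rw [hq i hi, norm_zero]]
    simpa only [Function.comp_def, he.extend_apply] using ha
  · exact (hw.union (isBounded_singleton (x := 0))).subset ((Set.range_extend_subset e w 0).trans
      (Set.union_subset_union_right _ (Set.image_subset_iff.2 fun _ _ => rfl)))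
  · rw [dser, ← he.tsum_eq]
    · refine tsum_congr fun s => ?_
      rw [he.extend_apply, he.extend_apply, innerChar_apply, Real.fourierChar_apply]
    · refine Function.support_subset_iff'.2 fun i hi => ?_
      rw [hq i hi, zero_mul]

lemma exists_dser_eqOn_latt {g : Ed d → ℂ} (hg : Summable fun ω => ‖g ω‖) (T : Ed d ≃ₗ[ℝ] Ed d)
    (l : Ed d) :
    ∃ q ω, (Summable fun i => ‖q i‖) ∧ IsBounded (Set.range ω) ∧
      Set.EqOn (dser q ω) (fun x => ∑' ω, g ω * innerChar ω x) (latt T l) := by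
  obtain ⟨ρ, hρ, hinnerChar⟩ := exists_isBounded_range_innerChar_eq T l
  have := hg.of_norm.countable_support.to_subtype
  let a (ω : Ed d) : ℂ := g ω * innerChar ω l * innerChar (ρ ω) (-l)
  have ha (ω : Ed d) : ‖a ω‖ = ‖g ω‖ := by
    simp only [a, norm_mul, Circle.norm_coe, mul_one]
  obtain ⟨q, w, hq, hw, hdser⟩ := exists_dser_eq (ι := Function.support g) (a := fun ω => a ω)
    (w := fun ω => ρ ω) (by simpa only [ha] using! hg.subtype _)
    (hρ.subset (Set.range_comp_subset_range _ ρ))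
  refine ⟨q, w, hq, hw, fun x hx => (hdser x).trans ?_⟩
  rw [tsum_subtype_eq_of_support_subset (f := fun ω => a ω * innerChar (ρ ω) x)]
  · refine tsum_congr fun ω => ?_
    have hx' : (innerChar (ρ ω) (-l) * innerChar (ρ ω) x : ℂ) = innerChar ω (x - l) := by
      rw [← Circle.coe_mul, ← AddChar.map_add_eq_mul, neg_add_eq_sub, hinnerChar ω x hx]
    rw [mul_assoc, hx', mul_assoc, ← Circle.coe_mul, ← AddChar.map_add_eq_mul, add_sub_cancel]
  · refine (Function.support_mul_subset_left _ _).trans ?_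
    exact fun ω hω h0 => hω (norm_eq_zero.1 (by rw [ha, h0, norm_zero]))

lemma IsFT.exists_eq_tsum_innerChar {μ ν : PPM (Ed d)} (hF : IsFT μ ν)
    (hμ : IsPolynomiallyBounded μ.mass) (hν : IsPolynomiallyBounded ν.mass) {β : ℝ} (hβ : 0 < β)
    (hsep : (Function.support μ.mass).Pairwise fun x y => β ≤ dist x y) :
    ∃ g : Ed d → ℂ, (Summable fun ω => ‖g ω‖) ∧
      Set.EqOn μ.mass (fun y => ∑' ω, g ω * innerChar ω y) (Function.support μ.mass) := by
  let f : ContDiffBump (0 : Ed d) := ⟨β / 2, β, half_pos hβ, half_lt_self hβ⟩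
  refine ⟨fun ω => ν.mass ω * 𝓕⁻ (bumpSchwartz f) ω, hν.summable_norm_mul _, fun y hy => ?_⟩
  have hball : Function.support μ.mass ∩ ball (0 + y) f.rOut ⊆ {y} := fun z hz => by
    by_contra hne
    exact (hsep hz.1 hy hne).not_gt (by simpa only [zero_add] using! hz.2)
  refine Eq.trans ?_ (hF.tsum_mul_comp_sub hμ hν (bumpSchwartz f) y)
  rw [tsum_mul_bumpSchwartz f hball, sub_self, bumpSchwartz_self, mul_one]

lemma eq_sum_indicator {ι X M : Type*} [Fintype ι] [AddCommMonoid M] {m : X → M} {A : ι → Set X}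
    {f : ι → X → M} (hsupp : Function.support m = ⋃ j, A j)
    (hdisj : Pairwise (Function.onFun Disjoint A)) (hf : ∀ j, Set.EqOn m (f j) (A j)) (x : X) :
    m x = ∑ j, (A j).indicator (f j) x := by
  calc m x = (⋃ j, A j).indicator m x := by rw [← hsupp, Set.indicator_support]
    _ = ∑ j, (A j).indicator m x := by
        simpa using Finset.indicator_biUnion_apply .univ A (fun _ _ _ _ hij => hdisj hij) x
    _ = ∑ j, (A j).indicator (f j) x :=
        Finset.sum_congr rfl fun j _ => congrFun (Set.indicator_congr (hf j)) x

end DirichletSeries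

/-- Let `μ` be a non-negative Poisson measure on `ℝ^d` with Fourier transform
`μh`, let `E = ∪_n B(x_n,R_n)` with `R_n → ∞`, and assume `μ{λ} ≥ c > 0` and `|λ-λ'| ≥ β > 0`
for all distinct `λ, λ' ∈ E ∩ supp μ`, and `|μ̂|(B(0,r)) = O(r^d)`. Then `supp μ` is a finite
union of translated lattices `T_j ℤ^d + λ_j` with `λ_j ∈ supp μ`, and
`μ = Σ_j Σ_{λ ∈ T_j ℤ^d + λ_j} Q_j(λ) δ_λ` with `Q_j` Dirichlet series with absolutely
summable coefficients and bounded spectrum. -/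
theorem statement5 {d : ℕ} (μ μh : PPM (Ed d)) (hpos : μ.Nonneg)
    (hμlf : μ.locFinite) (hμt : μ.temperate)
    (hμhlf : μh.locFinite) (hF : IsFT μ μh)
    (x : ℕ → Ed d) (R : ℕ → ℝ) (hR : Tendsto R atTop atTop)
    (E : Set (Ed d)) (hE : E = ⋃ n : ℕ, ball (x n) (R n))
    (c β : ℝ) (hc : 0 < c) (hβ : 0 < β)
    (hmass : ∀ l ∈ E ∩ Function.support μ.mass, c ≤ (μ.mass l).re)
    (hsep : ∀ l ∈ E ∩ Function.support μ.mass, ∀ l' ∈ E ∩ Function.support μ.mass,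
      l ≠ l' → β ≤ ‖l - l'‖)
    (hgrow : ∃ C : ℝ, ∀ᶠ r : ℝ in atTop,
      μh.var (ball 0 r) ≤ ENNReal.ofReal (C * r ^ d)) :
    ∃ (N : ℕ) (lam : Fin N → Ed d) (T : Fin N → (Ed d ≃ₗ[ℝ] Ed d))
      (q : Fin N → ℕ → ℂ) (ω : Fin N → ℕ → Ed d),
      (∀ j, lam j ∈ Function.support μ.mass) ∧
      Function.support μ.mass = ⋃ j : Fin N, latt (T j) (lam j) ∧
      (∀ j, Summable fun i => ‖q j i‖) ∧
      (∀ j, IsBounded (Set.range (ω j))) ∧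
      (∀ y : Ed d, μ.mass y =
        ∑ j : Fin N, Set.indicator (latt (T j) (lam j)) (dser (q j) (ω j)) y) := by
  have hν := PPM.hasBallGrowth hgrow
  have hνpoly := hν.isPolynomiallyBounded
  have hμ := (hF.hasBallGrowth hpos hμt hνpoly).isPolynomiallyBounded
  obtain ⟨τ, hτ, hτE⟩ := exists_isBohrNull_ball_subset μh.countable x hR
  rw [← hE] at hτE
  have hrec := hF.isRecurrent hμ hνpoly hτ
  have hβsep := hrec.pairwise_le_dist hpos.zero_le hμ hτE fun l hl l' hl' hne =>
    (hsep l hl l' hl' hne).trans_eq (dist_eq_norm l l').symm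
  have hgap (y : Ed d) (hy : μ.mass y ≠ 0) : c ≤ ‖μ.mass y‖ :=
    (hrec.le_re hβ hβsep hτE hmass hy).trans (re_le_norm _)
  obtain ⟨σ, hσ, hσdir⟩ := exists_isBohrNull_tendsto_abs_inner μh.countable
  obtain ⟨N, lam, T, hsupp, hdisj⟩ := (hF.isFourierStieltjes hμ hν).isLatticeUnion_support
    hc hgap hβ hβsep (hF.isRecurrent hμ hνpoly hσ) (hF.isRecurrent hμ hνpoly hσ.neg) hσdir
  have hlatt (j : Fin N) : latt (T j) (lam j) ⊆ Function.support μ.mass :=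
    hsupp ▸ Set.subset_iUnion (fun j => latt (T j) (lam j)) j
  obtain ⟨g, hg, hgμ⟩ := hF.exists_eq_tsum_innerChar hμ hνpoly hβ hβsep
  choose q ω hq hω hdser using fun j => exists_dser_eqOn_latt hg (T j) (lam j)
  exact ⟨N, lam, T, q, ω, fun j => hlatt j (self_mem_latt _ _), hsupp, hq, hω,
    eq_sum_indicator hsupp hdisj fun j => (hgμ.mono (hlatt j)).trans (hdser j).symm⟩

end
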